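/- arXiv:math/0608249 — 2 statements merged into one kernel-verified Lean document; each statement's English description precedes it below -/
import Mathlib

section
/- Fix an integer p ≥ 2, and let 𝒩(p) be the set of x ∈ [0,1) that are normal to every base q ≥ 2 with log q / log p irrational but are not normal to base p. Then every real number t ∈ [0,1) can be written as t = u + v (mod 1) with u, v ∈ 𝒩(p) (Pollington: 𝒩(p) + 𝒩(p) = 𝕋). -/
open Filter MeasureTheory Topology
open scoped Classical

/-- The `(n+1)`-st digit (i.e. `ε_{n+1}`, `0`-indexed by `n`) of the base-`q` expansion of `x`,
chosen as the greedy expansion (never eventually equal to `q - 1`). -/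
noncomputable def qdigit (q : ℕ) (x : ℝ) (n : ℕ) : ℕ :=
  (⌊x * (q : ℝ) ^ (n + 1)⌋).toNat % q

/-- `x` is normal to base `q`: every word `d` of length `m ≥ 1` over `{0, …, q-1}` occurs in the
base-`q` digit sequence of `x` with frequency `q^{-m}`. -/
def IsNormal (q : ℕ) (x : ℝ) : Prop :=
  ∀ m : ℕ, 0 < m → ∀ d : Fin m → ℕ, (∀ i, d i < q) →
    Tendsto
      (fun N : ℕ =>
        (((Finset.range N).filter fun n =>
          ∀ i : Fin m, qdigit q x (n + (i : ℕ)) = d i).card : ℝ) / N)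
      atTop (𝓝 (((q : ℝ) ^ m)⁻¹))

/-!
Work in base `P = p ^ 3 ≥ 8` and write `t = X + (t - X)`, where each base-`P` digit of `X` is chosen
by a fair coin between two consecutive digits. Since `P ≥ 8`, the pair can be taken among
`1, …, P - 2` and away from the corresponding digit of `t`, so that `X * P ^ j` and
`(t - X) * P ^ j` always have fractional part at least `1 / P`. This forbids long blocks of zeros in
base `p`, so neither summand is normal to base `p`.

For the other bases `q`, Weyl's criterion asks for the averages over `n` of `𝐞 (c * q ^ n * X)` to
vanish. If `c * q ^ n` has size about `P ^ M`, averaging over the digits of `X` near position `M`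
splits this term into a conditional mean and a fluctuation. The conditional mean is bounded by a
Riesz product `∏ |cos|` evaluated along an irrational rotation (`log q / log P` is irrational), so
its averages over `n` are small. The fluctuations belonging to disjoint blocks of digits are
orthogonal, and a strong law of large numbers makes their averages vanish almost surely.
-/

open scoped FourierTransform BoundedContinuousFunction

section CesaroMean

variable {E : Type*} [NormedAddCommGroup E] [NormedSpace ℝ E]

/-- The Cesàro mean of the first `N` terms of a sequence; it is `0` when `N = 0`. -/
noncomputable def cesaroMean (f : ℕ → E) (N : ℕ) : E :=
  (N : ℝ)⁻¹ • ∑ n ∈ Finset.range N, f n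

lemma cesaroMean_add (f g : ℕ → E) (N : ℕ) :
    cesaroMean (fun n => f n + g n) N = cesaroMean f N + cesaroMean g N := by
  simp only [cesaroMean, Finset.sum_add_distrib, smul_add]

lemma cesaroMean_sub (f g : ℕ → E) (N : ℕ) :
    cesaroMean (fun n => f n - g n) N = cesaroMean f N - cesaroMean g N := by
  simp only [cesaroMean, Finset.sum_sub_distrib, smul_sub]

lemma cesaroMean_smul {𝕜 : Type*} [NormedField 𝕜] [NormedSpace 𝕜 E] [SMulCommClass ℝ 𝕜 E]
    (c : 𝕜) (f : ℕ → E) (N : ℕ) : cesaroMean (fun n => c • f n) N = c • cesaroMean f N := by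
  simp only [cesaroMean, ← Finset.smul_sum, smul_comm]

lemma norm_cesaroMean_le_of_norm_le {f : ℕ → E} {g : ℕ → ℝ} (h : ∀ n, ‖f n‖ ≤ g n) (N : ℕ) :
    ‖cesaroMean f N‖ ≤ cesaroMean g N := by
  rw [cesaroMean, norm_smul, norm_inv, Real.norm_natCast]
  exact mul_le_mul_of_nonneg_left (norm_sum_le_of_le _ fun n _ => h n) (by positivity)

lemma tendsto_cesaroMean {f : ℕ → E} {a : E} (h : Tendsto f atTop (𝓝 a)) :
    Tendsto (cesaroMean f) atTop (𝓝 a) :=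
  h.cesaro_smul

lemma tendsto_cesaroMean_sub_const_iff {f : ℕ → E} {a : E} :
    Tendsto (cesaroMean fun n => f n - a) atTop (𝓝 0) ↔ Tendsto (cesaroMean f) atTop (𝓝 a) := by
  have hconst := tendsto_cesaroMean (tendsto_const_nhds (x := a))
  simp_rw [funext (cesaroMean_sub f fun _ => a)]
  exact ⟨fun h => by simpa using h.add hconst, fun h => by simpa using h.sub hconst⟩

theorem tendsto_cesaroMean_zero_of_approx {f : ℕ → E}
    (h : ∀ ε > 0, ∃ (g : ℕ → E) (b : ℕ → ℝ), ∃ c < ε, Tendsto (cesaroMean g) atTop (𝓝 0) ∧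
      Tendsto (cesaroMean b) atTop (𝓝 c) ∧ ∀ᶠ n in atTop, ‖f n - g n‖ ≤ b n) :
    Tendsto (cesaroMean f) atTop (𝓝 0) := by
  rw [Metric.tendsto_nhds]
  intro ε hε
  obtain ⟨g, b, c, hc, hg, hb, hfg⟩ := h ε hε
  set b' : ℕ → ℝ := fun n => max ‖f n - g n‖ (b n)
  have hb' : Tendsto (cesaroMean b') atTop (𝓝 c) := by
    have hdiff : Tendsto (fun n => b' n - b n) atTop (𝓝 0) := by
      refine tendsto_const_nhds.congr' ?_
      filter_upwards [hfg] with n hn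
      simp [b', max_eq_right hn]
    simpa [cesaroMean_sub] using (tendsto_cesaroMean hdiff).add hb
  have hsum : Tendsto (fun N => cesaroMean b' N + ‖cesaroMean g N‖) atTop (𝓝 c) := by
    simpa using hb'.add hg.norm
  filter_upwards [hsum.eventually_lt_const hc] with N hN
  rw [dist_zero_right]
  calc ‖cesaroMean f N‖ = ‖cesaroMean (fun n => f n - g n) N + cesaroMean g N‖ := by
        rw [cesaroMean_sub, sub_add_cancel]
    _ ≤ cesaroMean b' N + ‖cesaroMean g N‖ := (norm_add_le _ _).trans <| by
        gcongr
        exact norm_cesaroMean_le_of_norm_le (fun n => le_max_left _ _) N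
    _ < ε := hN

end CesaroMean

section Equidistribution

variable {X : Type*} [TopologicalSpace X] [MeasurableSpace X]

/-- A sequence is equidistributed with respect to `μ` when the Cesàro means of every bounded
continuous function along the sequence converge to its integral. -/
def Equidistributed (x : ℕ → X) (μ : Measure X) : Prop :=
  ∀ f : X →ᵇ ℂ, Tendsto (cesaroMean fun n => f (x n)) atTop (𝓝 (∫ y, f y ∂μ))

namespace Equidistributed

lemma tendsto_frequency [HasOuterApproxClosed X] [OpensMeasurableSpace X]
    [MeasurableSingletonClass X] {x : ℕ → X} {μ : Measure X} [IsProbabilityMeasure μ]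
    (hx : Equidistributed x μ) {E : Set X} (hE : μ (frontier E) = 0) :
    Tendsto (fun N : ℕ => (((Finset.range N).filter fun n => x n ∈ E).card : ℝ) / N) atTop
      (𝓝 (μ.real E)) := by
  rw [← tendsto_add_atTop_iff_nat 1]
  let ν (N : ℕ) : Measure X :=
    ((N + 1 : ℕ) : ENNReal)⁻¹ • ∑ n ∈ Finset.range (N + 1), Measure.dirac (x n)
  have hν (N : ℕ) : IsProbabilityMeasure (ν N) := ⟨by
    simpa [ν] using ENNReal.inv_mul_cancel (by simp) (by simp)⟩
  let νp (N : ℕ) : ProbabilityMeasure X := ⟨ν N, hν N⟩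
  let μp : ProbabilityMeasure X := ⟨μ, inferInstance⟩
  have hlim : Tendsto νp atTop (𝓝 μp) := by
    rw [ProbabilityMeasure.tendsto_iff_forall_integral_rclike_tendsto ℂ]
    intro f
    refine ((tendsto_add_atTop_iff_nat 1).2 (hx f)).congr fun N => ?_
    simp only [νp, ProbabilityMeasure.coe_mk, ν]
    rw [integral_smul_measure, integral_finsetSum_measure fun i _ => integrable_dirac (by simp)]
    simp only [integral_dirac, ENNReal.toReal_inv, ENNReal.toReal_natCast, cesaroMean]
  have hlimE := (ENNReal.tendsto_toReal (measure_ne_top μ E)).comp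
    (ProbabilityMeasure.tendsto_measure_of_null_frontier_of_tendsto' hlim hE)
  refine hlimE.congr fun N => ?_
  have hcard : ∑ n ∈ Finset.range (N + 1), Measure.dirac (x n) E =
      (((Finset.range (N + 1)).filter fun n => x n ∈ E).card : ENNReal) := by
    simp [Measure.dirac_apply, Set.indicator_apply]
  simp only [Function.comp_apply, νp, ProbabilityMeasure.coe_mk, ν, Measure.smul_apply,
    Measure.finsetSum_apply, smul_eq_mul, hcard, ENNReal.toReal_mul, ENNReal.toReal_inv,
    ENNReal.toReal_natCast, div_eq_inv_mul]

end Equidistributed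

instance : IsProbabilityMeasure (volume : Measure UnitAddCircle) := ⟨UnitAddCircle.measure_univ⟩

lemma integral_fourier (h : ℤ) : ∫ y : UnitAddCircle, fourier h y = if h = 0 then 1 else 0 := by
  have hcoeff := congrFun (fourierCoeff_fourier (T := (1 : ℝ)) h) 0
  have hvol : (volume : Measure UnitAddCircle) = AddCircle.haarAddCircle := by
    rw [AddCircle.volume_eq_smul_haarAddCircle]
    simp
  simpa [fourierCoeff, ← hvol, Pi.single_apply, eq_comm] using hcoeff

lemma integrable_continuousMap {X E : Type*} [TopologicalSpace X] [CompactSpace X]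
    [MeasurableSpace X] [OpensMeasurableSpace X] [NormedAddCommGroup E] {μ : Measure X}
    [IsFiniteMeasureOnCompacts μ] (f : C(X, E)) : Integrable f μ :=
  f.continuous.integrable_of_hasCompactSupport (.of_compactSpace _)

lemma tendsto_cesaroMean_of_mem_span_fourier {x : ℕ → UnitAddCircle}
    (hx : ∀ h : ℤ, h ≠ 0 → Tendsto (cesaroMean fun n => fourier h (x n)) atTop (𝓝 0))
    {g : C(UnitAddCircle, ℂ)} (hg : g ∈ Submodule.span ℂ (Set.range (@fourier (1 : ℝ)))) :
    Tendsto (cesaroMean fun n => g (x n)) atTop (𝓝 (∫ y, g y)) := by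
  induction hg using Submodule.span_induction with
  | mem g hg =>
    obtain ⟨h, rfl⟩ := hg
    rw [integral_fourier]
    split_ifs with hh
    · simpa [hh] using tendsto_cesaroMean (tendsto_const_nhds (x := (1 : ℂ)))
    · exact hx h hh
  | zero => simpa using tendsto_cesaroMean (tendsto_const_nhds (x := (0 : ℂ)))
  | add g₁ g₂ _ _ h₁ h₂ =>
    simp only [ContinuousMap.add_apply]
    rw [integral_add (integrable_continuousMap g₁) (integrable_continuousMap g₂)]
    exact (h₁.add h₂).congr fun N => (cesaroMean_add _ _ N).symm
  | smul a g _ hg =>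
    simp only [ContinuousMap.smul_apply]
    rw [integral_smul]
    exact (hg.const_smul a).congr fun N => (cesaroMean_smul a _ N).symm

theorem equidistributed_of_tendsto_fourier {x : ℕ → UnitAddCircle}
    (hx : ∀ h : ℤ, h ≠ 0 → Tendsto (cesaroMean fun n => fourier h (x n)) atTop (𝓝 0)) :
    Equidistributed x volume := by
  intro f
  rw [← tendsto_cesaroMean_sub_const_iff]
  refine tendsto_cesaroMean_zero_of_approx fun ε hε => ?_
  have hf : f.toContinuousMap ∈
      closure (Submodule.span ℂ (Set.range (@fourier (1 : ℝ))) : Set C(UnitAddCircle, ℂ)) := by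
    rw [← Submodule.topologicalClosure_coe, span_fourier_closure_eq_top]
    trivial
  obtain ⟨g, hg, hfg⟩ := Metric.mem_closure_iff.1 hf (ε / 4) (by positivity)
  have hpt (y : UnitAddCircle) : ‖f y - g y‖ ≤ ε / 4 :=
    (dist_eq_norm (f y) (g y)).symm.trans_le <|
      (ContinuousMap.dist_apply_le_dist (f := f.toContinuousMap) y).trans hfg.le
  have hmean : ‖(∫ y, f y) - ∫ y, g y‖ ≤ ε / 4 := by
    have hsub : ∫ y, (f y - g y) = (∫ y, f y) - ∫ y, g y :=
      integral_sub (integrable_continuousMap f.toContinuousMap) (integrable_continuousMap g)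
    simpa [← hsub] using norm_integral_le_of_norm_le_const (ae_of_all volume hpt)
  refine ⟨fun n => g (x n) - ∫ y, g y, fun _ => ε / 2, ε / 2, half_lt_self hε,
    tendsto_cesaroMean_sub_const_iff.2 (tendsto_cesaroMean_of_mem_span_fourier hx hg),
    tendsto_cesaroMean tendsto_const_nhds, Eventually.of_forall fun n => ?_⟩
  calc ‖f (x n) - (∫ y, f y) - (g (x n) - ∫ y, g y)‖
      = ‖(f (x n) - g (x n)) - ((∫ y, f y) - ∫ y, g y)‖ := by rw [sub_sub_sub_comm]
    _ ≤ ε / 4 + ε / 4 := norm_sub_le_of_le (hpt _) hmean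
    _ = ε / 2 := by ring

end Equidistribution

section Circle

lemma fourier_coe_eq_fourierChar (h : ℤ) (x : ℝ) :
    fourier h (x : UnitAddCircle) = (𝐞 (h * x) : ℂ) := by
  rw [fourier_coe_apply, Real.fourierChar_apply]
  congr 1
  push_cast
  ring

theorem equidistributed_nsmul_add {a : UnitAddCircle} (ha : ¬IsOfFinAddOrder a)
    (b : UnitAddCircle) : Equidistributed (fun n : ℕ => n • a + b) volume := by
  refine equidistributed_of_tendsto_fourier fun h hh => ?_
  have hne : fourier h a ≠ 1 := fun hone => by
    rw [fourier_apply, Circle.coe_eq_one, ← AddCircle.toCircle_zero (T := 1),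
      (AddCircle.injective_toCircle one_ne_zero).eq_iff] at hone
    exact ha (isOfFinAddOrder_iff_zsmul_eq_zero.2 ⟨h, hh, hone⟩)
  have hterm (n : ℕ) : fourier h (n • a + b) = fourier h a ^ n * fourier h b := by
    simp only [fourier_apply, zsmul_add, AddCircle.toCircle_add, smul_comm h n a,
      AddCircle.toCircle_nsmul, Circle.coe_mul, Circle.coe_pow]
  have hnorm (y : UnitAddCircle) : ‖fourier h y‖ = 1 := Circle.norm_coe _
  have hbound (N : ℕ) :
      ‖cesaroMean (fun n : ℕ => fourier h (n • a + b)) N‖ ≤ 2 / ‖fourier h a - 1‖ / N := by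
    have hsum : ‖fourier h a ^ N - 1‖ ≤ 2 :=
      (norm_sub_le _ _).trans_eq (by rw [norm_pow, hnorm, one_pow, norm_one, one_add_one_eq_two])
    simp only [cesaroMean, hterm, ← Finset.sum_mul, geom_sum_eq hne, norm_smul, norm_mul,
      norm_div, norm_inv, Real.norm_natCast, hnorm, mul_one]
    rw [inv_mul_eq_div]
    gcongr
  exact squeeze_zero_norm hbound (tendsto_const_div_atTop_nhds_zero_nat _)

lemma equidistributed_irrational_rotation {α : ℝ} (hα : Irrational α) (β : ℝ) :
    Equidistributed (fun n : ℕ => ((n * α + β : ℝ) : UnitAddCircle)) volume := by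
  have hord : ¬IsOfFinAddOrder (α : UnitAddCircle) := by
    simpa [AddCircle.not_isOfFinAddOrder_iff_forall_rat_ne_div, Irrational] using hα
  simpa [← nsmul_eq_mul] using equidistributed_nsmul_add hord β

lemma coe_mem_image_coe_Ico_iff {a b : ℝ} (ha : 0 ≤ a) (hb : b ≤ 1) (x : ℝ) :
    (x : UnitAddCircle) ∈ ((↑) : ℝ → UnitAddCircle) '' Set.Ico a b ↔
      Int.fract x ∈ Set.Ico a b := by
  refine ⟨?_, fun h => ⟨_, h, AddCircle.coe_fract x⟩⟩
  rintro ⟨z, hz, hzx⟩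
  rw [← AddCircle.coe_fract x] at hzx
  rwa [← (AddCircle.coe_eq_coe_iff_of_mem_Ico (a := 0) (p := 1)
    ⟨ha.trans hz.1, by linarith [hz.2]⟩
    ⟨Int.fract_nonneg x, by linarith [Int.fract_lt_one x]⟩).1 hzx]

lemma volume_frontier_image_coe_Ico (a b : ℝ) :
    volume (frontier (((↑) : ℝ → UnitAddCircle) '' Set.Ico a b)) = 0 := by
  have hinterior : ((↑) : ℝ → UnitAddCircle) '' Set.Ioo a b ⊆ interior ((↑) '' Set.Ico a b) :=
    interior_maximal (Set.image_mono Set.Ioo_subset_Ico_self)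
      (QuotientAddGroup.isOpenMap_coe _ isOpen_Ioo)
  have hclosure : closure ((↑) '' Set.Ico a b) ⊆ ((↑) : ℝ → UnitAddCircle) '' Set.Icc a b :=
    closure_minimal (Set.image_mono Set.Ico_subset_Icc_self)
      (isCompact_Icc.image (AddCircle.continuous_mk' 1)).isClosed
  have hnull (x : UnitAddCircle) : volume {x} = 0 := by
    simpa using AddCircle.volume_closedBall (T := 1) (x := x) 0
  refine measure_mono_null (t := {(a : UnitAddCircle)} ∪ {(b : UnitAddCircle)}) ?_
    (measure_union_null (hnull _) (hnull _))
  rintro y ⟨hy, hy'⟩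
  obtain ⟨z, hz, rfl⟩ := hclosure hy
  rcases hz.1.eq_or_lt with rfl | haz
  · exact .inl rfl
  rcases hz.2.eq_or_lt with rfl | hzb
  · exact .inr rfl
  · exact absurd (hinterior ⟨z, ⟨haz, hzb⟩, rfl⟩) hy'

lemma volume_real_image_coe_Ico {a b : ℝ} (ha : 0 ≤ a) (hab : a ≤ b) (hb : b ≤ 1) :
    volume.real (((↑) : ℝ → UnitAddCircle) '' Set.Ico a b) = b - a := by
  have hpre : ((↑) : ℝ → UnitAddCircle) ⁻¹' ((↑) '' Set.Ico a b) ∩ Set.Ico 0 1 = Set.Ico a b := by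
    ext x
    rw [Set.mem_inter_iff, Set.mem_preimage, coe_mem_image_coe_Ico_iff ha hb]
    refine ⟨fun h => Int.fract_eq_self.2 h.2 ▸ h.1, fun h => ?_⟩
    have h01 : x ∈ Set.Ico 0 1 := ⟨ha.trans h.1, h.2.trans_le hb⟩
    exact ⟨(Int.fract_eq_self.2 h01).symm ▸ h, h01⟩
  rw [measureReal_def, ← (UnitAddCircle.measurePreserving_mk 0).measure_preimage
      (nullMeasurableSet_of_null_frontier (volume_frontier_image_coe_Ico a b)), zero_add,
    ← Measure.restrict_congr_set Ico_ae_eq_Ioc, Measure.restrict_apply' measurableSet_Ico, hpre,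
    Real.volume_Ico, ENNReal.toReal_ofReal (sub_nonneg.2 hab)]

namespace Equidistributed

lemma tendsto_frequency_fract {x : ℕ → ℝ}
    (hx : Equidistributed (fun n => (x n : UnitAddCircle)) volume) {a b : ℝ} (ha : 0 ≤ a)
    (hab : a ≤ b) (hb : b ≤ 1) :
    Tendsto (fun N : ℕ => (((Finset.range N).filter fun n =>
      Int.fract (x n) ∈ Set.Ico a b).card : ℝ) / N) atTop (𝓝 (b - a)) := by
  simpa only [coe_mem_image_coe_Ico_iff ha hb, volume_real_image_coe_Ico ha hab hb] using
    hx.tendsto_frequency (volume_frontier_image_coe_Ico a b)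

lemma tendsto_cesaroMean_fract {x : ℕ → ℝ}
    (hx : Equidistributed (fun n => (x n : UnitAddCircle)) volume) {φ : ℝ → ℝ}
    (hφ : ContinuousOn φ (Set.Icc 0 1)) (h01 : φ 0 = φ 1) :
    Tendsto (cesaroMean fun n => φ (Int.fract (x n))) atTop (𝓝 (∫ θ in (0 : ℝ)..1, φ θ)) := by
  let φC (θ : ℝ) : ℂ := φ θ
  have hφC : φC 0 = φC (0 + 1) := by simp only [φC, h01, zero_add]
  let F : C(UnitAddCircle, ℂ) := ⟨AddCircle.liftIco 1 0 φC,
    AddCircle.liftIco_continuous hφC (by rw [zero_add]; fun_prop)⟩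
  have hF (y : ℝ) : F y = φ (Int.fract y) := by
    rw [← AddCircle.coe_fract y]
    exact AddCircle.liftIco_zero_coe_apply (f := φC) ⟨Int.fract_nonneg y, Int.fract_lt_one y⟩
  have hint : ∫ y, F y = ((∫ θ in (0 : ℝ)..1, φ θ : ℝ) : ℂ) := by
    rw [← intervalIntegral.integral_ofReal]
    have hlift := AddCircle.integral_liftIoc_eq_intervalIntegral 1 (t := 0) (f := φC)
    rwa [AddCircle.liftIoc_eq_liftIco hφC, zero_add] at hlift
  rw [← tendsto_ofReal_iff, ← hint]
  refine (hx (.mkOfCompact F)).congr fun N => ?_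
  simp [cesaroMean, hF]

end Equidistributed

end Circle

section Digits

variable {q : ℕ}

lemma fract_fract_mul_natCast (x : ℝ) (k : ℕ) :
    Int.fract (Int.fract x * k) = Int.fract (x * k) := by
  refine Int.fract_eq_fract.2 ⟨-(⌊x⌋ * k), ?_⟩
  push_cast
  rw [Int.fract]
  ring

lemma natCast_qdigit (hq : 0 < q) {x : ℝ} (hx : 0 ≤ x) (n : ℕ) :
    (qdigit q x n : ℤ) = ⌊Int.fract (x * (q : ℝ) ^ n) * q⌋ := by
  have hq' : (0 : ℝ) < q := by exact_mod_cast hq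
  have hfloor : ⌊x * (q : ℝ) ^ (n + 1)⌋ =
      ⌊Int.fract (x * (q : ℝ) ^ n) * q⌋ + ⌊x * (q : ℝ) ^ n⌋ * q := by
    rw [← Int.floor_add_intCast]
    congr 1
    push_cast
    rw [Int.fract]
    ring
  have hlt : ⌊Int.fract (x * (q : ℝ) ^ n) * q⌋ < q := by
    rw [Int.floor_lt]
    exact mul_lt_of_lt_one_left (by exact_mod_cast hq') (Int.fract_lt_one _)
  rw [qdigit, Int.natCast_mod, Int.toNat_of_nonneg (Int.floor_nonneg.2 (by positivity)), hfloor,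
    Int.add_mul_emod_self_right, Int.emod_eq_of_lt (Int.floor_nonneg.2 (by positivity)) hlt]

/-- The left endpoint `0.d₀d₁…d_{m-1}` of the `q`-adic interval formed by the numbers of `[0, 1)`
whose base-`q` expansion starts with the word `d`. -/
noncomputable def cylinderStart (q : ℕ) {m : ℕ} (d : Fin m → ℕ) : ℝ :=
  ∑ i, d i / (q : ℝ) ^ ((i : ℕ) + 1)

lemma cylinderStart_succ {m : ℕ} (d : Fin (m + 1) → ℕ) :
    cylinderStart q d = (d 0 + cylinderStart q fun i => d i.succ) / q := by
  simp only [cylinderStart, Fin.sum_univ_succ, add_div, Finset.sum_div, Fin.val_zero, zero_add,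
    pow_one, Fin.val_succ, pow_succ _ (_ + 1), div_div]

lemma cylinderStart_nonneg {m : ℕ} (d : Fin m → ℕ) : 0 ≤ cylinderStart q d :=
  Finset.sum_nonneg fun _ _ => by positivity

lemma cylinderStart_add_le_one {m : ℕ} (d : Fin m → ℕ) (hd : ∀ i, d i < q) :
    cylinderStart q d + ((q : ℝ) ^ m)⁻¹ ≤ 1 := by
  induction m with
  | zero => simp [cylinderStart]
  | succ m ih =>
    have hq : (0 : ℝ) < q := by exact_mod_cast (Nat.zero_le _).trans_lt (hd 0)
    have hd0 : (d 0 : ℝ) + 1 ≤ q := by exact_mod_cast hd 0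
    have htail := ih (fun i => d i.succ) fun i => hd i.succ
    rw [cylinderStart_succ, pow_succ, mul_inv, ← div_eq_mul_inv, ← add_div, div_le_one hq]
    linarith

lemma floor_eq_and_fract_mem_Ico_iff {a b : ℝ} (ha : 0 ≤ a) (hb : b ≤ 1) (k : ℤ) (y : ℝ) :
    ⌊y⌋ = k ∧ Int.fract y ∈ Set.Ico a b ↔ y ∈ Set.Ico (k + a) (k + b) := by
  constructor
  · rintro ⟨rfl, h⟩
    rw [Int.fract] at h
    exact ⟨by linarith [h.1], by linarith [h.2]⟩
  · rintro ⟨h₁, h₂⟩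
    obtain rfl : ⌊y⌋ = k := Int.floor_eq_iff.2 ⟨by linarith, by linarith⟩
    exact ⟨rfl, by rw [Int.fract]; linarith, by rw [Int.fract]; linarith⟩

theorem forall_qdigit_eq_iff_fract_mem_Ico {x : ℝ} (hx : 0 ≤ x) {m : ℕ} (d : Fin m → ℕ)
    (hd : ∀ i, d i < q) (n : ℕ) :
    (∀ i : Fin m, qdigit q x (n + i) = d i) ↔
      Int.fract (x * (q : ℝ) ^ n) ∈
        Set.Ico (cylinderStart q d) (cylinderStart q d + ((q : ℝ) ^ m)⁻¹) := by
  induction m generalizing n with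
  | zero => simp [cylinderStart, Int.fract_lt_one]
  | succ m ih =>
    have hq : 0 < q := (Nat.zero_le _).trans_lt (hd 0)
    have hq' : (0 : ℝ) < q := by exact_mod_cast hq
    have htail := ih (fun i => d i.succ) (fun i => hd i.succ) (n + 1)
    rw [pow_succ, ← mul_assoc, ← fract_fract_mul_natCast] at htail
    rw [Fin.forall_fin_succ]
    simp only [Fin.val_zero, Fin.val_succ, add_zero, ← add_assoc, add_right_comm n _ 1]
    rw [htail, ← Nat.cast_inj (R := ℤ), natCast_qdigit hq hx,
      floor_eq_and_fract_mem_Ico_iff (cylinderStart_nonneg _)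
        (cylinderStart_add_le_one _ fun i => hd i.succ), cylinderStart_succ, pow_succ, mul_inv,
      ← div_eq_mul_inv _ (q : ℝ), ← add_div, Set.mem_Ico, Set.mem_Ico, div_le_iff₀ hq',
      lt_div_iff₀ hq', Int.cast_natCast, add_assoc]

theorem isNormal_of_equidistributed {x : ℝ} (hx : 0 ≤ x)
    (h : Equidistributed (fun n : ℕ => ((x * (q : ℝ) ^ n : ℝ) : UnitAddCircle)) volume) :
    IsNormal q x := by
  intro m _ d hd
  simpa only [forall_qdigit_eq_iff_fract_mem_Ico hx d hd, add_sub_cancel_left] using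
    h.tendsto_frequency_fract (cylinderStart_nonneg d)
      (le_add_of_nonneg_right (by positivity)) (cylinderStart_add_le_one d hd)

lemma not_isNormal_of_word_avoided {x : ℝ} {m : ℕ} (hm : 0 < m) (d : Fin m → ℕ)
    (hd : ∀ i, d i < q) (havoid : ∀ n, ¬∀ i : Fin m, qdigit q x (n + i) = d i) :
    ¬IsNormal q x := by
  intro hnormal
  have hq : (0 : ℝ) < q := by exact_mod_cast (Nat.zero_le _).trans_lt (hd ⟨0, hm⟩)
  have hfreq := hnormal m hm d hd
  simp only [havoid, Finset.filter_false, Finset.card_empty, Nat.cast_zero, zero_div] at hfreq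
  exact (inv_pos.2 (pow_pos hq m)).ne (tendsto_nhds_unique tendsto_const_nhds hfreq)

theorem not_isNormal_of_le_fract {x : ℝ} (hx : 0 ≤ x) (hq : 0 < q) {k : ℕ} (hk : 0 < k)
    (hgap : ∀ j, ((q : ℝ) ^ k)⁻¹ ≤ Int.fract (x * ((q : ℝ) ^ k) ^ j)) : ¬IsNormal q x := by
  refine not_isNormal_of_word_avoided (m := 2 * k) (by omega) 0 (fun _ => hq) fun n hzero => ?_
  have hstart : k * (n / k + 1) = n + (k - n % k) := by
    have hdiv := Nat.div_add_mod n k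
    have hmod := Nat.mod_lt n hk
    rw [Nat.mul_add_one]
    omega
  have hblock (i : Fin k) : qdigit q x (k * (n / k + 1) + i) = (0 : Fin k → ℕ) i := by
    rw [hstart, add_assoc]
    exact hzero ⟨k - n % k + i, by omega⟩
  rw [forall_qdigit_eq_iff_fract_mem_Ico hx 0 fun _ => hq] at hblock
  have hlt := hblock.2
  simp only [cylinderStart, Pi.zero_apply, Nat.cast_zero, zero_div, Finset.sum_const_zero,
    zero_add, pow_mul] at hlt
  exact (hgap _).not_gt hlt

lemma not_isNormal_fract_of_le_fract {q k : ℕ} {x : ℝ} (hq : 0 < q) (hk : 0 < k)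
    (hgap : ∀ j, ((q : ℝ) ^ k)⁻¹ ≤ Int.fract (x * ((q : ℝ) ^ k) ^ j)) :
    ¬IsNormal q (Int.fract x) := by
  refine not_isNormal_of_le_fract (Int.fract_nonneg x) hq hk fun j => ?_
  have hshift := fract_fract_mul_natCast x ((q ^ k) ^ j)
  push_cast at hshift
  exact hshift ▸ hgap j

end Digits

section RieszProduct

lemma integral_norm_sq_sum_fourier {ι : Type*} (s : Finset ι) {n : ι → ℤ} (hn : Set.InjOn n s) :
    ∫ y : UnitAddCircle, ‖∑ i ∈ s, fourier (n i) y‖ ^ 2 = s.card := by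
  have hexpand (y : UnitAddCircle) : ((‖∑ i ∈ s, fourier (n i) y‖ ^ 2 : ℝ) : ℂ) =
      ∑ i ∈ s, ∑ j ∈ s, fourier (n i - n j) y := by
    rw [Complex.ofReal_pow, ← Complex.mul_conj', map_sum, Finset.sum_mul_sum]
    simp only [sub_eq_add_neg, fourier_add, fourier_neg]
  have hint (m : ℤ) : Integrable (fourier m : UnitAddCircle → ℂ) :=
    integrable_continuousMap (fourier m)
  rw [← Complex.ofReal_inj, ← integral_complex_ofReal]
  simp only [hexpand]
  rw [integral_finsetSum _ fun _ _ => integrable_finsetSum _ fun _ _ => hint _]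
  simp only [integral_finsetSum _ fun _ _ => hint _, integral_fourier, sub_eq_zero]
  calc ∑ i ∈ s, ∑ j ∈ s, (if n i = n j then (1 : ℂ) else 0) = ∑ i ∈ s, 1 :=
        Finset.sum_congr rfl fun i hi => by
          rw [Finset.sum_congr rfl fun _ hj => if_congr (hn.eq_iff hi hj) rfl rfl,
            Finset.sum_ite_eq, if_pos hi]
    _ = ((s.card : ℝ) : ℂ) := by simp

/-- The Riesz-type product `∏_{k < K} |(1 + e(P ^ k y)) / 2|²`; it is the squared modulus of the
characteristic function of a number with `K` independent uniform digits in `{0, 1}` in base `P`. -/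
noncomputable def rieszProduct (P K : ℕ) (y : UnitAddCircle) : ℝ :=
  ∏ k ∈ Finset.range K, ‖(1 + fourier (P ^ k : ℕ) y) / 2‖ ^ 2

variable {P : ℕ}

lemma rieszProduct_nonneg (K : ℕ) (y : UnitAddCircle) : 0 ≤ rieszProduct P K y :=
  Finset.prod_nonneg fun _ _ => by positivity

lemma continuous_rieszProduct (K : ℕ) : Continuous (rieszProduct P K) := by
  unfold rieszProduct
  fun_prop

lemma rieszProduct_coe_abs (K : ℕ) (x : ℝ) :
    rieszProduct P K (|x| : ℝ) = rieszProduct P K (x : ℝ) := by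
  have hneg (y : UnitAddCircle) : rieszProduct P K (-y) = rieszProduct P K y := by
    refine Finset.prod_congr rfl fun k _ => ?_
    rw [← norm_star, star_div₀]
    simp [fourier_apply]
  rcases abs_choice x with h | h <;> rw [h]
  rw [AddCircle.coe_neg, hneg]

lemma integral_rieszProduct (hP : 2 ≤ P) (K : ℕ) :
    ∫ y, rieszProduct P K y = (1 / 2) ^ K := by
  have hexpand (y : UnitAddCircle) : rieszProduct P K y =
      ‖∑ S ∈ (Finset.range K).powerset, fourier (∑ k ∈ S, P ^ k : ℕ) y‖ ^ 2 / 4 ^ K := by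
    have hmul (S : Finset ℕ) :
        ∏ k ∈ S, fourier (P ^ k : ℕ) y = fourier (∑ k ∈ S, P ^ k : ℕ) y := by
      simp only [fourier_apply, natCast_zsmul, Finset.sum_smul]
      induction S using Finset.induction_on with
      | empty => simp
      | insert k S hk ih =>
        rw [Finset.prod_insert hk, Finset.sum_insert hk, AddCircle.toCircle_add, Circle.coe_mul, ih]
    simp only [rieszProduct, norm_div, div_pow, Finset.prod_div_distrib, Finset.prod_pow,
      ← norm_prod, Finset.prod_one_add, hmul, Finset.prod_const, Finset.card_range,
      Complex.norm_ofNat]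
    rw [pow_right_comm]
    norm_num
  have hinj : Function.Injective fun S : Finset ℕ => ((∑ k ∈ S, P ^ k : ℕ) : ℤ) :=
    Nat.cast_injective.comp (Finset.geomSum_injective hP)
  simp only [hexpand, integral_div, integral_norm_sq_sum_fourier _ hinj.injOn, Finset.card_powerset,
    Finset.card_range]
  rw [Nat.cast_pow, ← div_pow]
  norm_num

lemma intervalIntegral_coe_add_natCast {f : UnitAddCircle → ℝ} (hf : Continuous f) (a : ℝ)
    (n : ℕ) : ∫ y in a..a + n, f y = n * ∫ y, f y := by
  have hper : Function.Periodic (fun y : ℝ => f y) 1 := fun y => by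
    simp only [AddCircle.coe_add_period]
  have hcont : Continuous fun y : ℝ => f y := hf.comp (AddCircle.continuous_mk' 1)
  simpa [UnitAddCircle.intervalIntegral_preimage] using
    hper.intervalIntegral_add_zsmul_eq n a fun s t => hcont.intervalIntegrable s t

lemma log_mul_integral_comp_const_rpow_le {b : ℝ} (hb : 1 < b) {f : ℝ → ℝ} (hf : Continuous f)
    (hf0 : ∀ y, 0 ≤ f y) :
    Real.log b * ∫ θ in (0 : ℝ)..1, f (b ^ θ) ≤ ∫ y in (1 : ℝ)..b, f y := by
  have hb0 : 0 < b := zero_lt_one.trans hb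
  have hpow : Continuous fun θ : ℝ => b ^ θ := Real.continuous_const_rpow hb0.ne'
  have hsubst := intervalIntegral.integral_comp_mul_deriv (a := 0) (b := 1)
    (f := fun θ : ℝ => b ^ θ) (f' := fun θ : ℝ => b ^ θ * Real.log b) (g := f)
    (fun θ _ => (Real.hasStrictDerivAt_const_rpow hb0 θ).hasDerivAt) (by fun_prop) hf
  simp only [Real.rpow_zero, Real.rpow_one, Function.comp_apply] at hsubst
  rw [← hsubst, ← intervalIntegral.integral_const_mul]
  refine intervalIntegral.integral_mono_on zero_le_one
    (Continuous.intervalIntegrable (by fun_prop) _ _)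
    (Continuous.intervalIntegrable (by fun_prop) _ _) fun θ hθ => ?_
  rw [mul_comm]
  gcongr
  · exact hf0 _
  · exact le_mul_of_one_le_left (Real.log_nonneg hb.le) (Real.one_le_rpow hb.le hθ.1)

theorem integral_rieszProduct_rpow_le (hP : 2 ≤ P) (K : ℕ) :
    ∫ θ in (0 : ℝ)..1, rieszProduct P K ((P : ℝ) ^ θ : ℝ) ≤
      (P - 1) / Real.log P * (1 / 2) ^ K := by
  have hP1 : (1 : ℝ) < P := by exact_mod_cast hP
  have hperiods := intervalIntegral_coe_add_natCast (continuous_rieszProduct (P := P) K) 1 (P - 1)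
  rw [integral_rieszProduct hP, Nat.cast_sub (by omega), Nat.cast_one, add_sub_cancel] at hperiods
  rw [div_mul_eq_mul_div, le_div_iff₀' (Real.log_pos hP1), ← hperiods]
  exact log_mul_integral_comp_const_rpow_le hP1
    ((continuous_rieszProduct K).comp (AddCircle.continuous_mk' 1)) fun y => rieszProduct_nonneg K y

theorem tendsto_cesaroMean_rieszProduct (hP : 2 ≤ P) (K : ℕ) {α : ℝ} (hα : Irrational α) (β : ℝ) :
    ∃ c : ℝ, c ≤ (P - 1) / Real.log P * (1 / 2) ^ K ∧
      Tendsto (cesaroMean fun n : ℕ => rieszProduct P K ((P : ℝ) ^ Int.fract (n * α + β) : ℝ))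
        atTop (𝓝 c) := by
  let φ (θ : ℝ) : ℝ := rieszProduct P K ((P : ℝ) ^ θ : ℝ)
  have hφ : Continuous φ := (continuous_rieszProduct K).comp <|
    (AddCircle.continuous_mk' 1).comp (Real.continuous_const_rpow (by positivity))
  have hφ01 : φ 0 = φ 1 := by
    have hP1 : ((P : ℝ) : UnitAddCircle) = (1 : ℝ) := by
      rw [← sub_eq_zero, ← AddCircle.coe_sub, AddCircle.coe_eq_zero_iff]
      exact ⟨P - 1, by simp⟩
    simp only [φ, Real.rpow_zero, Real.rpow_one, hP1]
  have hrot := equidistributed_irrational_rotation hα β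
  exact ⟨_, integral_rieszProduct_rpow_le hP K,
    hrot.tendsto_cesaroMean_fract (φ := φ) hφ.continuousOn hφ01⟩

end RieszProduct

section LawOfLargeNumbers

variable {E : Type*} [NormedAddCommGroup E]

lemma norm_cesaroMean_le_of_sq_le [NormedSpace ℝ E] {f : ℕ → E} {B : ℝ} (hf : ∀ n, ‖f n‖ ≤ B)
    {k N : ℕ} (hk : 0 < k) (hkN : k ^ 2 ≤ N) (hNk : N ≤ k ^ 2 + 2 * k) :
    ‖cesaroMean f N‖ ≤ ‖cesaroMean f (k ^ 2)‖ + 2 * B / k := by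
  have hB : 0 ≤ B := (norm_nonneg _).trans (hf 0)
  have hkN' : (k : ℝ) ^ 2 ≤ N := mod_cast hkN
  have hNk' : (N : ℝ) ≤ k ^ 2 + 2 * k := mod_cast hNk
  have hgap : ‖∑ n ∈ Finset.Ico (k ^ 2) N, f n‖ ≤ 2 * k * B := by
    refine (norm_sum_le_of_le _ fun n _ => hf n).trans ?_
    rw [Finset.sum_const, Nat.card_Ico, nsmul_eq_mul, Nat.cast_sub hkN, Nat.cast_pow]
    gcongr
    linarith
  calc ‖cesaroMean f N‖ = (N : ℝ)⁻¹ * ‖∑ n ∈ Finset.range N, f n‖ := by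
        rw [cesaroMean, norm_smul, norm_inv, Real.norm_natCast]
    _ ≤ ((k : ℝ) ^ 2)⁻¹ * (‖∑ n ∈ Finset.range (k ^ 2), f n‖ + 2 * k * B) := by
        rw [← Finset.sum_range_add_sum_Ico _ hkN]
        gcongr
        exact (norm_add_le _ _).trans (by gcongr)
    _ = ‖cesaroMean f (k ^ 2)‖ + 2 * B / k := by
        rw [cesaroMean, norm_smul, norm_inv, Real.norm_natCast, Nat.cast_pow]
        field_simp

lemma tendsto_cesaroMean_zero_of_sq [NormedSpace ℝ E] {f : ℕ → E} {B : ℝ} (hf : ∀ n, ‖f n‖ ≤ B)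
    (h : Tendsto (fun k : ℕ => cesaroMean f (k ^ 2)) atTop (𝓝 0)) :
    Tendsto (cesaroMean f) atTop (𝓝 0) := by
  have hsqrt : Tendsto Nat.sqrt atTop atTop :=
    tendsto_atTop.2 fun b => (eventually_ge_atTop (b * b)).mono fun N hN => Nat.le_sqrt.2 hN
  have hbound : Tendsto (fun k : ℕ => ‖cesaroMean f (k ^ 2)‖ + 2 * B / k) atTop (𝓝 0) := by
    simpa using h.norm.add (tendsto_const_div_atTop_nhds_zero_nat (2 * B))
  refine squeeze_zero_norm' ?_ (hbound.comp hsqrt)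
  filter_upwards [eventually_gt_atTop 0] with N hN
  refine norm_cesaroMean_le_of_sq_le hf (Nat.sqrt_pos.2 hN) (Nat.sqrt_le' N) ?_
  linarith [Nat.sqrt_le_add N]

variable {Ω : Type*} [MeasurableSpace Ω] {μ : Measure Ω} {Y : ℕ → Ω → E} {B : ℝ}

lemma aestronglyMeasurable_cesaroMean [NormedSpace ℝ E] (hY : ∀ n, AEStronglyMeasurable (Y n) μ)
    (N : ℕ) : AEStronglyMeasurable (fun ω => cesaroMean (Y · ω) N) μ :=
  (Finset.aestronglyMeasurable_fun_sum _ fun n _ => hY n).const_smul _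

variable [IsFiniteMeasure μ]

-- Along the squares the second moments `C / k ^ 2` are summable.
theorem ae_tendsto_cesaroMean_zero_of_integral_norm_sq_le [NormedSpace ℝ E]
    (hY : ∀ n, AEStronglyMeasurable (Y n) μ) (hB : ∀ n ω, ‖Y n ω‖ ≤ B) {C : ℝ}
    (hC : ∀ N, ∫ ω, ‖cesaroMean (Y · ω) N‖ ^ 2 ∂μ ≤ C / N) :
    ∀ᵐ ω ∂μ, Tendsto (cesaroMean (Y · ω)) atTop (𝓝 0) := by
  set Z : ℕ → Ω → ℝ := fun k ω => ‖cesaroMean (Y · ω) (k ^ 2)‖ ^ 2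
  have hZ_meas k : AEStronglyMeasurable (Z k) μ :=
    (aestronglyMeasurable_cesaroMean hY _).norm.pow 2
  have hZ_bound k ω : ‖Z k ω‖ ≤ (cesaroMean (fun _ => B) (k ^ 2)) ^ 2 := by
    rw [norm_pow, norm_norm]
    gcongr
    exact norm_cesaroMean_le_of_norm_le (hB · ω) _
  have hZ_norm k : eLpNorm (Z k) 1 μ ≤ ENNReal.ofReal (C * (1 / (k : ℝ) ^ 2)) := by
    rw [eLpNorm_one_eq_lintegral_enorm, ← ofReal_integral_norm_eq_lintegral_enorm
      (.of_bound (hZ_meas k) _ (ae_of_all _ (hZ_bound k)))]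
    refine ENNReal.ofReal_le_ofReal ?_
    calc ∫ ω, ‖Z k ω‖ ∂μ = ∫ ω, Z k ω ∂μ := by simp_rw [Z, norm_pow, norm_norm]
      _ ≤ C / (k ^ 2 : ℕ) := hC (k ^ 2)
      _ = C * (1 / (k : ℝ) ^ 2) := by rw [Nat.cast_pow, mul_one_div]
  have hsum : Summable fun k : ℕ => C * (1 / (k : ℝ) ^ 2) :=
    (Real.summable_one_div_nat_pow.2 one_lt_two).mul_left C
  filter_upwards [summable_norm_of_tsum_eLpNorm_ne_top le_rfl hZ_meas
    (ne_top_of_le_ne_top hsum.tsum_ofReal_ne_top (ENNReal.tsum_le_tsum hZ_norm))] with ω hω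
  refine tendsto_cesaroMean_zero_of_sq (hB · ω) (tendsto_zero_iff_norm_tendsto_zero.2 ?_)
  simpa [Z, Real.sqrt_sq] using (hω.tendsto_atTop_zero).sqrt

variable [InnerProductSpace ℝ E]

lemma integrable_inner_of_bound (hY : ∀ n, AEStronglyMeasurable (Y n) μ)
    (hB : ∀ n ω, ‖Y n ω‖ ≤ B) (n m : ℕ) : Integrable (fun ω => inner ℝ (Y n ω) (Y m ω)) μ :=
  .of_bound ((hY n).inner (hY m)) (B * B) <| ae_of_all _ fun ω =>
    (norm_inner_le_norm _ _).trans (mul_le_mul (hB n ω) (hB m ω) (norm_nonneg _)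
      ((norm_nonneg _).trans (hB n ω)))

lemma integral_norm_sq_sum (hY : ∀ n, AEStronglyMeasurable (Y n) μ)
    (hB : ∀ n ω, ‖Y n ω‖ ≤ B) (s : Finset ℕ) :
    ∫ ω, ‖∑ n ∈ s, Y n ω‖ ^ 2 ∂μ = ∑ n ∈ s, ∑ m ∈ s, ∫ ω, inner ℝ (Y n ω) (Y m ω) ∂μ := by
  have hint := integrable_inner_of_bound hY hB
  simp_rw [← real_inner_self_eq_norm_sq, sum_inner, inner_sum]
  rw [integral_finsetSum _ fun n _ => integrable_finsetSum _ fun m _ => hint n m]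
  exact Finset.sum_congr rfl fun n _ => integral_finsetSum _ fun m _ => hint n m

lemma card_filter_lt_add_le (s : Finset ℕ) (n g : ℕ) :
    (s.filter fun m => n < m + g ∧ m < n + g).card ≤ 2 * g :=
  calc _ ≤ (Finset.Ico (n - g) (n + g)).card := Finset.card_le_card fun m => by
        simp only [Finset.mem_filter, Finset.mem_Ico]
        omega
    _ ≤ 2 * g := by
        rw [Nat.card_Ico]
        omega

lemma integral_norm_sq_sum_le_of_orthogonal (hY : ∀ n, AEStronglyMeasurable (Y n) μ)
    (hB : ∀ n ω, ‖Y n ω‖ ≤ B) {g : ℕ}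
    (horth : ∀ n m, n + g ≤ m → ∫ ω, inner ℝ (Y n ω) (Y m ω) ∂μ = 0) (s : Finset ℕ) :
    ∫ ω, ‖∑ n ∈ s, Y n ω‖ ^ 2 ∂μ ≤ s.card * (2 * g * (μ.real Set.univ * B ^ 2)) := by
  have hle n m : ∫ ω, inner ℝ (Y n ω) (Y m ω) ∂μ ≤
      if n < m + g ∧ m < n + g then μ.real Set.univ * B ^ 2 else 0 := by
    split_ifs with h
    · calc _ ≤ ∫ _, B ^ 2 ∂μ := integral_mono (integrable_inner_of_bound hY hB n m)
            (integrable_const _) fun ω => (real_inner_le_norm _ _).trans <| by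
              nlinarith [hB n ω, hB m ω, norm_nonneg (Y n ω), norm_nonneg (Y m ω)]
        _ = μ.real Set.univ * B ^ 2 := by rw [integral_const, smul_eq_mul]
    · obtain h | h : n + g ≤ m ∨ m + g ≤ n := by omega
      · exact (horth n m h).le
      · simp_rw [real_inner_comm (Y m _)]
        exact (horth m n h).le
  calc _ ≤ ∑ n ∈ s, ∑ m ∈ s, if n < m + g ∧ m < n + g then μ.real Set.univ * B ^ 2 else 0 := by
        rw [integral_norm_sq_sum hY hB]
        gcongr with n _ m _
        exact hle n m
    _ ≤ ∑ n ∈ s, 2 * g * (μ.real Set.univ * B ^ 2) := by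
        gcongr with n
        rw [← Finset.sum_filter, Finset.sum_const, nsmul_eq_mul]
        gcongr
        exact_mod_cast card_filter_lt_add_le s n g
    _ = _ := by rw [Finset.sum_const, nsmul_eq_mul]

theorem ae_tendsto_cesaroMean_zero_of_orthogonal (hY : ∀ n, AEStronglyMeasurable (Y n) μ)
    (hB : ∀ n ω, ‖Y n ω‖ ≤ B) {g : ℕ}
    (horth : ∀ n m, n + g ≤ m → ∫ ω, inner ℝ (Y n ω) (Y m ω) ∂μ = 0) :
    ∀ᵐ ω ∂μ, Tendsto (cesaroMean (Y · ω)) atTop (𝓝 0) := by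
  refine ae_tendsto_cesaroMean_zero_of_integral_norm_sq_le hY hB
    (C := 2 * g * (μ.real Set.univ * B ^ 2)) fun N => ?_
  have h := integral_norm_sq_sum_le_of_orthogonal hY hB horth (Finset.range N)
  simp only [cesaroMean, norm_smul, mul_pow, integral_const_mul, norm_inv, Real.norm_natCast]
  rw [Finset.card_range] at h
  rcases N.eq_zero_or_pos with rfl | hN
  · simp
  · calc _ ≤ ((N : ℝ)⁻¹) ^ 2 * (N * (2 * g * (μ.real Set.univ * B ^ 2))) := by gcongr
      _ = _ := by field_simp

end LawOfLargeNumbers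

section InfiniteProduct

variable {ι : Type*} {X : ι → Type*} [∀ i, MeasurableSpace (X i)] (μ : ∀ i, Measure (X i))
  [∀ i, IsProbabilityMeasure (μ i)] {𝕜 : Type*} [RCLike 𝕜]

lemma integral_finset_prod_infinitePi (s : Finset ι) {f : ∀ i, X i → 𝕜}
    (hf : ∀ i, AEStronglyMeasurable (f i) (μ i)) :
    ∫ ω, ∏ i ∈ s, f i (ω i) ∂Measure.infinitePi μ = ∏ i ∈ s, ∫ x, f i x ∂μ i := by
  have hmeas : AEStronglyMeasurable (fun y : ∀ i : s, X i => ∏ i : s, f i (y i))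
      (Measure.pi fun i : s => μ i) :=
    Finset.aestronglyMeasurable_fun_prod _ fun i _ =>
      (hf i).comp_quasiMeasurePreserving (Measure.quasiMeasurePreserving_eval _ i)
  simp only [← Finset.prod_coe_sort s, ← integral_fintype_prod_eq_prod (𝕜 := 𝕜)]
  exact integral_restrict_infinitePi μ hmeas

lemma integral_mul_infinitePi_of_dependsOn {S T : Finset ι} (hST : Disjoint S T)
    {f g : (∀ i, X i) → 𝕜} (hf : Measurable f) (hg : Measurable g)
    (hfS : DependsOn f (S : Set ι)) (hgT : DependsOn g (T : Set ι)) :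
    ∫ ω, f ω * g ω ∂Measure.infinitePi μ =
      (∫ ω, f ω ∂Measure.infinitePi μ) * ∫ ω, g ω ∂Measure.infinitePi μ := by
  let x₀ (i : ι) : X i := (μ i).nonempty_of_neZero.some
  have hfactor {h : (∀ i, X i) → 𝕜} {U : Finset ι} (hU : DependsOn h (U : Set ι)) (ω : ∀ i, X i) :
      h ω = h (Function.updateFinset x₀ U fun i => ω i) :=
    hU fun i hi => by simp [Function.updateFinset, Finset.mem_coe.1 hi]
  have hind := (ProbabilityTheory.iIndepFun_infinitePi (P := μ) (X := fun _ x => x)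
    fun _ => measurable_id).indepFun_finset S T hST fun i => measurable_pi_apply i
  have hmeas {h : (∀ i, X i) → 𝕜} (hh : Measurable h) (U : Finset ι) :
      Measurable fun y => h (Function.updateFinset x₀ U y) := hh.comp measurable_updateFinset
  have hmul := hind.integral_fun_comp_mul_comp (Finset.measurable_restrict S).aemeasurable
    (Finset.measurable_restrict T).aemeasurable
    (hmeas hf S).aestronglyMeasurable (hmeas hg T).aestronglyMeasurable
  simpa only [← hfactor hfS, ← hfactor hgT] using hmul

lemma integral_inner_mul_sub_integral_infinitePi_eq_zero {S T : Finset ι} (hST : Disjoint S T)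
    {Z F G : (∀ i, X i) → ℂ} (hZ : Measurable Z) (hF : Measurable F) (hG : Measurable G)
    (hZS : DependsOn Z (S : Set ι)) (hFS : DependsOn F (S : Set ι)) (hGT : DependsOn G (T : Set ι))
    {B : ℝ} (hZB : ∀ ω, ‖Z ω‖ ≤ B) (hFB : ∀ ω, ‖F ω‖ ≤ B) (hGB : ∀ ω, ‖G ω‖ ≤ B) :
    ∫ ω, inner ℝ (Z ω) (F ω * (G ω - ∫ ω', G ω' ∂Measure.infinitePi μ)) ∂Measure.infinitePi μ
      = 0 := by
  have hG_int : Integrable G (Measure.infinitePi μ) :=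
    .of_bound hG.aestronglyMeasurable B (ae_of_all _ hGB)
  have hcentred : ∫ ω, (G ω - ∫ ω', G ω' ∂Measure.infinitePi μ) ∂Measure.infinitePi μ = 0 := by
    rw [integral_sub hG_int (integrable_const _)]
    simp
  have hW : Measurable fun ω => F ω * starRingEnd ℂ (Z ω) :=
    hF.mul (Complex.continuous_conj.measurable.comp hZ)
  have hint : Integrable (fun ω => F ω * starRingEnd ℂ (Z ω) *
      (G ω - ∫ ω', G ω' ∂Measure.infinitePi μ)) (Measure.infinitePi μ) :=
    (hG_int.sub (integrable_const _)).bdd_mul hW.aestronglyMeasurable (c := B * B) <|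
      ae_of_all _ fun ω => by
        rw [norm_mul, RCLike.norm_conj]
        exact mul_le_mul (hFB ω) (hZB ω) (norm_nonneg _) ((norm_nonneg _).trans (hFB ω))
  have hfactor := integral_mul_infinitePi_of_dependsOn μ hST hW (hG.sub_const _)
    (fun x y hxy => by simp only [hFS hxy, hZS hxy])
    (fun x y hxy => congrArg (· - ∫ ω', G ω' ∂Measure.infinitePi μ) (hGT hxy))
  rw [hcentred, mul_zero] at hfactor
  simpa [Complex.inner, mul_right_comm, hfactor] using (integral_re hint)

end InfiniteProduct

-- Once the blocks are disjoint, the centred factor of the later one is independent of the rest.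
theorem ae_tendsto_cesaroMean_blockFluctuation {X : ℕ → Type*} [∀ i, MeasurableSpace (X i)]
    (μ : ∀ i, Measure (X i)) [∀ i, IsProbabilityMeasure (μ i)] {F G : ℕ → (∀ i, X i) → ℂ}
    {a b : ℕ → ℕ} (hF : ∀ n, Measurable (F n)) (hG : ∀ n, Measurable (G n))
    (hF1 : ∀ n ω, ‖F n ω‖ ≤ 1) (hG1 : ∀ n ω, ‖G n ω‖ ≤ 1)
    (hFa : ∀ n, DependsOn (F n) (Finset.range (a n) : Set ℕ))
    (hGab : ∀ n, DependsOn (G n) (Finset.Ico (a n) (b n) : Set ℕ))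
    (hab : ∀ n, a n ≤ b n) {g : ℕ} (hgap : ∀ n m, n + g ≤ m → b n ≤ a m) :
    ∀ᵐ ω ∂Measure.infinitePi μ, Tendsto
      (cesaroMean fun n => F n ω * (G n ω - ∫ ω', G n ω' ∂Measure.infinitePi μ)) atTop (𝓝 0) := by
  set e : ℕ → ℂ := fun n => ∫ ω', G n ω' ∂Measure.infinitePi μ
  set Y : ℕ → (∀ i, X i) → ℂ := fun n ω => F n ω * (G n ω - e n)
  have hY n : Measurable (Y n) := (hF n).mul ((hG n).sub_const _)
  have hY_bound n ω : ‖Y n ω‖ ≤ 2 := by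
    have he : ‖e n‖ ≤ 1 := by
      simpa using norm_integral_le_of_norm_le_const (ae_of_all (Measure.infinitePi μ) (hG1 n))
    calc ‖Y n ω‖ ≤ 1 * (1 + 1) := by
          rw [norm_mul]
          exact mul_le_mul (hF1 n ω) ((norm_sub_le _ _).trans (add_le_add (hG1 n ω) he))
            (norm_nonneg _) zero_le_one
      _ = 2 := by norm_num
  refine ae_tendsto_cesaroMean_zero_of_orthogonal (fun n => (hY n).aestronglyMeasurable)
    hY_bound (g := g) fun n m hnm => ?_
  have hpast : DependsOn (Y n) (Finset.range (a m) : Set ℕ) := fun x y hxy => by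
    have hF_eq := hFa n fun i hi => hxy i (by
      simp only [Finset.coe_range, Set.mem_Iio] at hi ⊢
      linarith [hab n, hgap n m hnm])
    have hG_eq := hGab n fun i hi => hxy i (by
      simp only [Finset.coe_Ico, Set.mem_Ico, Finset.coe_range, Set.mem_Iio] at hi ⊢
      exact hi.2.trans_le (hgap n m hnm))
    simp only [Y, hF_eq, hG_eq]
  exact integral_inner_mul_sub_integral_infinitePi_eq_zero μ
    (Finset.disjoint_left.2 fun i => by simp +contextual) (hY n) (hF m) (hG m) hpast (hFa m)
    (hGab m) (hY_bound n) (fun ω => (hF1 m ω).trans one_le_two)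
    (fun ω => (hG1 m ω).trans one_le_two)

section RandomDigits

lemma addChar_map_sum {A M ι : Type*} [AddCommMonoid A] [CommMonoid M] (ψ : AddChar A M)
    (s : Finset ι) (f : ι → A) : ψ (∑ i ∈ s, f i) = ∏ i ∈ s, ψ (f i) :=
  map_prod ψ.toMonoidHom (fun i => Multiplicative.ofAdd (f i)) s

/-- The law of an independent sequence of fair coin tosses. -/
noncomputable abbrev coinTosses : Measure (ℕ → Bool) :=
  Measure.infinitePi fun _ => (PMF.uniformOfFintype Bool).toMeasure

variable {P : ℕ}

/-- The digits `D i (ω i)` with positions `i ∈ S` contribute `digitSum D S ω` to the number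
`Real.ofDigits fun i => D i (ω i)` whose base-`P` digits are selected by the coin tosses `ω`. -/
noncomputable def digitSum (D : ℕ → Bool → Fin P) (S : Finset ℕ) (ω : ℕ → Bool) : ℝ :=
  ∑ i ∈ S, Real.ofDigitsTerm (fun j => D j (ω j)) i

variable (D : ℕ → Bool → Fin P)

lemma measurable_digitSum (S : Finset ℕ) : Measurable (digitSum D S) :=
  Finset.measurable_fun_sum S fun i _ => Measurable.mul_const
    ((Measurable.of_discrete (f := fun b => ((D i b : ℕ) : ℝ))).comp (measurable_pi_apply i)) _

lemma dependsOn_digitSum (S : Finset ℕ) : DependsOn (digitSum D S) (S : Set ℕ) := fun ω ω' h =>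
  Finset.sum_congr rfl fun i hi => by simp only [Real.ofDigitsTerm, h i hi]

lemma abs_ofDigits_sub_digitSum_range_le (b : ℕ) (ω : ℕ → Bool) :
    |Real.ofDigits (fun i => D i (ω i)) - digitSum D (Finset.range b) ω| ≤ ((P : ℝ) ^ b)⁻¹ := by
  rw [Real.ofDigits_eq_sum_add_ofDigits _ b, digitSum, add_sub_cancel_left, abs_of_nonneg
    (mul_nonneg (by positivity) (Real.ofDigits_nonneg _))]
  exact mul_le_of_le_one_right (by positivity) (Real.ofDigits_le_one _)

lemma norm_integral_fourierChar_digitSum {D : ℕ → Bool → Fin P}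
    (hD : ∀ i, (D i true : ℕ) = D i false + 1) (l : ℝ) (S : Finset ℕ) :
    ‖∫ ω, (𝐞 (l * digitSum D S ω) : ℂ) ∂coinTosses‖ =
      ∏ i ∈ S, ‖(1 + (𝐞 (l / P ^ (i + 1)) : ℂ)) / 2‖ := by
  let f (i : ℕ) (b : Bool) : ℂ := 𝐞 (l * (D i b * ((P : ℝ) ^ (i + 1))⁻¹))
  have hprod (ω : ℕ → Bool) : (𝐞 (l * digitSum D S ω) : ℂ) = ∏ i ∈ S, f i (ω i) := by
    rw [digitSum, Finset.mul_sum]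
    exact addChar_map_sum (Circle.coeHom.compAddChar 𝐞) S _
  have hfactor (i : ℕ) : ‖∫ b, f i b ∂(PMF.uniformOfFintype Bool).toMeasure‖ =
      ‖(1 + (𝐞 (l / P ^ (i + 1)) : ℂ)) / 2‖ := by
    have htrue : f i true = f i false * (𝐞 (l / P ^ (i + 1)) : ℂ) := by
      rw [← Circle.coe_mul, ← AddChar.map_add_eq_mul]
      simp only [f, hD]
      push_cast
      ring_nf
    have hmean : ∫ b, f i b ∂(PMF.uniformOfFintype Bool).toMeasure =
        f i false * ((1 + (𝐞 (l / P ^ (i + 1)) : ℂ)) / 2) := by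
      rw [PMF.integral_eq_sum, Fintype.sum_bool, htrue]
      simp
      ring
    rw [hmean, norm_mul, Circle.norm_coe, one_mul]
  simp only [hprod, integral_finset_prod_infinitePi _ S fun i =>
    (Measurable.of_discrete (f := f i)).aestronglyMeasurable, norm_prod, hfactor]

-- The digit at position `M - 1 - k` contributes the `k`-th factor of the Riesz product.
lemma norm_sq_integral_fourierChar_digitSum_le {D : ℕ → Bool → Fin P}
    (hD : ∀ i, (D i true : ℕ) = D i false + 1) (l : ℝ) {M K : ℕ} (hKM : K ≤ M) {S : Finset ℕ}
    (hS : Finset.Ico (M - K) M ⊆ S) :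
    ‖∫ ω, (𝐞 (l * digitSum D S ω) : ℂ) ∂coinTosses‖ ^ 2 ≤
      rieszProduct P K (l / P ^ M : ℝ) := by
  have hP : (P : ℝ) ≠ 0 := mod_cast (Fin.pos (D 0 true)).ne'
  rw [norm_integral_fourierChar_digitSum hD, rieszProduct, ← Finset.prod_pow]
  have hfactor (z : Circle) : ‖(1 + (z : ℂ)) / 2‖ ^ 2 ≤ 1 := by
    have hz := norm_add_le (1 : ℂ) z
    rw [norm_one, Circle.norm_coe] at hz
    rw [norm_div, Complex.norm_ofNat]
    exact pow_le_one₀ (by positivity) (by linarith)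
  calc ∏ i ∈ S, ‖(1 + (𝐞 (l / P ^ (i + 1)) : ℂ)) / 2‖ ^ 2
      ≤ ∏ i ∈ Finset.Ico (M - K) M, ‖(1 + (𝐞 (l / P ^ (i + 1)) : ℂ)) / 2‖ ^ 2 :=
        Finset.prod_le_prod_of_subset_of_le_one hS (fun _ _ => by positivity)
          fun _ _ _ => hfactor _
    _ = ∏ k ∈ Finset.range K, ‖(1 + (𝐞 (l / P ^ (M - K + k + 1)) : ℂ)) / 2‖ ^ 2 := by
        rw [Finset.prod_Ico_eq_prod_range, Nat.sub_sub_self hKM]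
    _ = ∏ k ∈ Finset.range K,
          ‖(1 + fourier (P ^ k : ℕ) ((l / P ^ M : ℝ) : UnitAddCircle)) / 2‖ ^ 2 := by
        rw [← Finset.prod_range_reflect]
        refine Finset.prod_congr rfl fun k hk => ?_
        have hexp : M = M - K + (K - 1 - k) + 1 + k := by
          have := Finset.mem_range.1 hk
          omega
        have harg : l / (P : ℝ) ^ (M - K + (K - 1 - k) + 1) = (P : ℝ) ^ k * (l / (P : ℝ) ^ M) := by
          conv_rhs => rw [hexp, pow_add _ _ k]
          field_simp
        rw [fourier_coe_eq_fourierChar, harg]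
        push_cast
        rfl

lemma norm_fourierChar_sub_le (x y : ℝ) : ‖(𝐞 x - 𝐞 y : ℂ)‖ ≤ 2 * Real.pi * |x - y| := by
  have hfactor : (𝐞 x - 𝐞 y : ℂ) =
      𝐞 y * (Complex.exp (Complex.I * (2 * Real.pi * (x - y) : ℝ)) - 1) := by
    rw [mul_sub_one, mul_comm Complex.I, ← Real.fourierChar_apply, ← Circle.coe_mul,
      ← AddChar.map_add_eq_mul, add_sub_cancel]
  calc ‖(𝐞 x - 𝐞 y : ℂ)‖ ≤ ‖2 * Real.pi * (x - y)‖ := by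
        rw [hfactor, norm_mul, Circle.norm_coe, one_mul]
        exact Real.norm_exp_I_mul_ofReal_sub_one_le
    _ = 2 * Real.pi * |x - y| := by
        rw [Real.norm_eq_abs, abs_mul, abs_of_pos Real.two_pi_pos]

/-- The approximation of `𝐞 (γ + l * X)`, for `X` the number with digits `D i (ω i)`, obtained by
dropping the digits from position `b` on and centring the factor of the digits in `[a, b)`. -/
noncomputable def digitFluctuation (γ l : ℝ) (a b : ℕ) (ω : ℕ → Bool) : ℂ :=
  𝐞 (γ + l * digitSum D (Finset.range a) ω) * (𝐞 (l * digitSum D (Finset.Ico a b) ω) -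
    ∫ ω', (𝐞 (l * digitSum D (Finset.Ico a b) ω') : ℂ) ∂coinTosses)

lemma norm_fourierChar_ofDigits_sub_le {γ l : ℝ} {a M K : ℕ} (ha : a ≤ M)
    (hl : |l| ≤ P ^ (M + 1)) (ω : ℕ → Bool) :
    ‖(𝐞 (γ + l * Real.ofDigits fun i => D i (ω i)) : ℂ) - digitFluctuation D γ l a (M + K) ω‖ ≤
      2 * Real.pi * (P / P ^ K) +
        ‖∫ ω', (𝐞 (l * digitSum D (Finset.Ico a (M + K)) ω') : ℂ) ∂coinTosses‖ := by
  set E : ℂ := ∫ ω', (𝐞 (l * digitSum D (Finset.Ico a (M + K)) ω') : ℂ) ∂coinTosses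
  set F : Circle := 𝐞 (γ + l * digitSum D (Finset.range a) ω)
  set G : Circle := 𝐞 (l * digitSum D (Finset.Ico a (M + K)) ω)
  have hP : (0 : ℝ) < P := mod_cast Fin.pos (D 0 true)
  have hFG : F * G = 𝐞 (γ + l * digitSum D (Finset.range (M + K)) ω) := by
    simp only [F, G, digitSum]
    rw [← AddChar.map_add_eq_mul, ← Finset.sum_range_add_sum_Ico _ (ha.trans (M.le_add_right K)),
      mul_add, add_assoc]
  have htail : |l * Real.ofDigits (fun i => D i (ω i)) -
      l * digitSum D (Finset.range (M + K)) ω| ≤ P / P ^ K := by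
    rw [← mul_sub, abs_mul]
    calc _ ≤ (P : ℝ) ^ (M + 1) * ((P : ℝ) ^ (M + K))⁻¹ := by
          gcongr
          exact abs_ofDigits_sub_digitSum_range_le D _ ω
      _ = P / P ^ K := by
          field_simp
          ring
  calc _ = ‖((𝐞 (γ + l * Real.ofDigits fun i => D i (ω i)) : ℂ) - (F * G : Circle)) + F * E‖ := by
        rw [show digitFluctuation D γ l a (M + K) ω = F * (G - E) from rfl, Circle.coe_mul]
        ring_nf
    _ ≤ 2 * Real.pi * (P / P ^ K) + ‖E‖ := by
        refine (norm_add_le _ _).trans (add_le_add ?_ (by rw [norm_mul, Circle.norm_coe, one_mul]))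
        rw [hFG]
        refine (norm_fourierChar_sub_le _ _).trans ?_
        rw [add_sub_add_left_eq_sub]
        gcongr

lemma ae_tendsto_cesaroMean_digitFluctuation (γ l : ℕ → ℝ) {M : ℕ → ℕ} (K : ℕ) {g : ℕ}
    (hM : ∀ n m, n + g ≤ m → M n + 2 * K ≤ M m) :
    ∀ᵐ ω ∂coinTosses, Tendsto
      (cesaroMean fun n => digitFluctuation D (γ n) (l n) (M n - K) (M n + K) ω) atTop (𝓝 0) := by
  have hmeas : Measurable fun x : ℝ => (𝐞 x : ℂ) :=
    Real.differentiable_fourierChar.continuous.measurable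
  refine ae_tendsto_cesaroMean_blockFluctuation _ (a := fun n => M n - K) (b := fun n => M n + K)
    (g := g) (fun n => hmeas.comp (((measurable_digitSum D _).const_mul _).const_add _))
    (fun n => hmeas.comp ((measurable_digitSum D _).const_mul _))
    (fun n ω => (Circle.norm_coe _).le) (fun n ω => (Circle.norm_coe _).le)
    (fun n ω ω' h => by rw [dependsOn_digitSum D _ h])
    (fun n ω ω' h => by rw [dependsOn_digitSum D _ h])
    (fun n => by omega) fun n m hnm => ?_
  have := hM n m hnm
  omega

end RandomDigits

section ExponentialSums

lemma exists_forall_natFloor_add_le {α β : ℝ} (hα : 0 < α) (hβ : 0 ≤ β) (k : ℕ) :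
    ∃ g : ℕ, ∀ n m : ℕ, n + g ≤ m → ⌊n * α + β⌋₊ + k ≤ ⌊m * α + β⌋₊ := by
  refine ⟨⌈k / α⌉₊, fun n m h => ?_⟩
  have hk : (k : ℝ) ≤ ⌈k / α⌉₊ * α := (div_le_iff₀ hα).1 (Nat.le_ceil _)
  rw [← Nat.floor_add_natCast (by positivity)]
  refine Nat.floor_mono ?_
  calc n * α + β + k ≤ (n + ⌈k / α⌉₊ : ℕ) * α + β := by
        push_cast
        linarith
    _ ≤ m * α + β := by gcongr

lemma rpow_div_pow_natFloor {b x : ℝ} (hb : 0 < b) (hx : 0 ≤ x) :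
    b ^ x / b ^ ⌊x⌋₊ = b ^ Int.fract x := by
  rw [← Real.rpow_natCast, ← Real.rpow_sub hb, natCast_floor_eq_intCast_floor hx,
    Int.self_sub_floor]

lemma abs_mul_pow_eq_rpow {b c r : ℝ} (hb : 1 < b) (hc : c ≠ 0) (hr : 0 < r) (n : ℕ) :
    |c * r ^ n| = b ^ (n * Real.logb b r + Real.logb b |c|) := by
  have hb0 : 0 < b := zero_lt_one.trans hb
  rw [Real.rpow_add hb0, mul_comm (n : ℝ), Real.rpow_mul_natCast hb0.le,
    Real.rpow_logb hb0 hb.ne' hr, Real.rpow_logb hb0 hb.ne' (abs_pos.2 hc), abs_mul, abs_pow,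
    abs_of_pos hr, mul_comm]

lemma rpow_le_pow_natFloor_add_one {b : ℝ} (hb : 1 ≤ b) (x : ℝ) : b ^ x ≤ b ^ (⌊x⌋₊ + 1) := by
  rw [← Real.rpow_natCast]
  exact Real.rpow_le_rpow_of_exponent_le hb (mod_cast (Nat.lt_floor_add_one x).le)

lemma norm_fourierChar_ofDigits_sub_le_rieszProduct {P : ℕ} {D : ℕ → Bool → Fin P}
    (hD : ∀ i, (D i true : ℕ) = D i false + 1) {γ l x η : ℝ} (hx : 0 ≤ x) (hl : |l| = P ^ x)
    {K : ℕ} (hK : K ≤ ⌊x⌋₊) (hη : 0 < η) (ω : ℕ → Bool) :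
    ‖(𝐞 (γ + l * Real.ofDigits fun i => D i (ω i)) : ℂ) -
      digitFluctuation D γ l (⌊x⌋₊ - K) (⌊x⌋₊ + K) ω‖ ≤
      2 * Real.pi * (P / P ^ K) + η + η⁻¹ * rieszProduct P K ((P : ℝ) ^ Int.fract x : ℝ) := by
  have hP : (1 : ℝ) ≤ P := mod_cast Fin.pos (D 0 true)
  have hscale : |l / (P : ℝ) ^ ⌊x⌋₊| = (P : ℝ) ^ Int.fract x := by
    rw [abs_div, abs_of_pos (by positivity : (0 : ℝ) < P ^ ⌊x⌋₊), hl,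
      rpow_div_pow_natFloor (by positivity) hx]
  set e := ‖∫ ω', (𝐞 (l * digitSum D (Finset.Ico (⌊x⌋₊ - K) (⌊x⌋₊ + K)) ω') : ℂ) ∂coinTosses‖
  have hmean : e ^ 2 ≤ rieszProduct P K ((P : ℝ) ^ Int.fract x : ℝ) := by
    rw [← hscale, rieszProduct_coe_abs]
    exact norm_sq_integral_fourierChar_digitSum_le hD l hK
      (Finset.Ico_subset_Ico_right (Nat.le_add_right _ K))
  have hamgm : e ≤ η + η⁻¹ * e ^ 2 := by
    have hsplit : η + η⁻¹ * e ^ 2 - e = η⁻¹ * ((e - η) ^ 2 + η * e) := by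
      field_simp
      ring
    have : 0 ≤ η⁻¹ * ((e - η) ^ 2 + η * e) := by positivity
    linarith
  calc _ ≤ 2 * Real.pi * (P / P ^ K) + e :=
        norm_fourierChar_ofDigits_sub_le D (Nat.sub_le _ K)
          (hl.trans_le (rpow_le_pow_natFloor_add_one hP x)) ω
    _ ≤ 2 * Real.pi * (P / P ^ K) + (η + η⁻¹ * e ^ 2) := by gcongr
    _ ≤ _ := by
        rw [← add_assoc]
        gcongr

lemma exists_tail_add_bound_lt {b : ℝ} (hb : 1 < b) (C : ℝ) {ε : ℝ} (hε : 0 < ε) :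
    ∃ K : ℕ, 2 * Real.pi * (b / b ^ K) + ε / 2 + (ε / 2)⁻¹ * (C * (1 / 2) ^ K) < ε := by
  have htail : Tendsto (fun K : ℕ => b / b ^ K) atTop (𝓝 0) :=
    tendsto_const_nhds.div_atTop (tendsto_pow_atTop_atTop_of_one_lt hb)
  have hpow : Tendsto (fun K : ℕ => (1 / 2 : ℝ) ^ K) atTop (𝓝 0) :=
    tendsto_pow_atTop_nhds_zero_of_lt_one (by norm_num) (by norm_num)
  have hlim := ((htail.const_mul (2 * Real.pi)).add_const (ε / 2)).add
    ((hpow.const_mul C).const_mul (ε / 2)⁻¹)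
  exact (hlim.eventually_lt_const (by linarith)).exists

theorem ae_tendsto_cesaroMean_fourierChar {P : ℕ} {D : ℕ → Bool → Fin P}
    (hD : ∀ i, (D i true : ℕ) = D i false + 1) {c r : ℝ} (hc : 1 ≤ |c|) (hr : 1 < r)
    (hirr : Irrational (Real.logb P r)) (γ : ℕ → ℝ) :
    ∀ᵐ ω ∂coinTosses, Tendsto
      (cesaroMean fun n => (𝐞 (γ n + c * r ^ n * Real.ofDigits fun i => D i (ω i)) : ℂ))
      atTop (𝓝 0) := by
  have hP : 2 ≤ P := by
    have := hD 0
    lia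
  have hP1 : (1 : ℝ) < P := by exact_mod_cast hP
  set α := Real.logb P r
  set β := Real.logb P |c|
  set l : ℕ → ℝ := fun n => c * r ^ n
  set M : ℕ → ℕ := fun n => ⌊n * α + β⌋₊
  have hα : 0 < α := Real.logb_pos hP1 hr
  have hβ : 0 ≤ β := Real.logb_nonneg hP1 hc
  have hl (n : ℕ) : |l n| = P ^ (n * α + β) :=
    abs_mul_pow_eq_rpow hP1 (abs_pos.1 (zero_lt_one.trans_le hc)) (zero_lt_one.trans hr) n
  have hfluct (K : ℕ) := (exists_forall_natFloor_add_le hα hβ (2 * K)).elim fun g hg =>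
    ae_tendsto_cesaroMean_digitFluctuation D γ l (M := M) K (g := g) hg
  filter_upwards [ae_all_iff.2 hfluct] with ω hω
  refine tendsto_cesaroMean_zero_of_approx fun ε hε => ?_
  obtain ⟨K, hK⟩ := exists_tail_add_bound_lt hP1 ((P - 1) / Real.log P) hε
  obtain ⟨R, hR, hRlim⟩ := tendsto_cesaroMean_rieszProduct hP K hirr β
  refine ⟨_, fun n => 2 * Real.pi * (P / P ^ K) + ε / 2 +
    (ε / 2)⁻¹ * rieszProduct P K ((P : ℝ) ^ Int.fract (n * α + β) : ℝ),
    2 * Real.pi * (P / P ^ K) + ε / 2 + (ε / 2)⁻¹ * R,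
    (by gcongr : _ ≤ _).trans_lt hK, hω K, ?_, ?_⟩
  · refine ((tendsto_cesaroMean tendsto_const_nhds).add (hRlim.const_smul (ε / 2)⁻¹)).congr
      fun N => ?_
    rw [← cesaroMean_smul, ← cesaroMean_add]
    rfl
  · have hM : Tendsto M atTop atTop := tendsto_nat_floor_atTop.comp <|
      tendsto_atTop_add_const_right _ _ (tendsto_natCast_atTop_atTop.atTop_mul_const hα)
    filter_upwards [hM.eventually_ge_atTop K] with n hn
    exact norm_fourierChar_ofDigits_sub_le_rieszProduct hD (by positivity) (hl n) hn (half_pos hε) ω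

end ExponentialSums

theorem ae_isNormal_fract_add_mul_ofDigits {P : ℕ} {D : ℕ → Bool → Fin P}
    (hD : ∀ i, (D i true : ℕ) = D i false + 1) (b : ℝ) {c : ℝ} (hc : 1 ≤ |c|) :
    ∀ᵐ ω ∂coinTosses, ∀ q : ℕ, 2 ≤ q → Irrational (Real.logb P q) →
      IsNormal q (Int.fract (b + c * Real.ofDigits fun i => D i (ω i))) := by
  simp only [ae_all_iff, eventually_imp_distrib_left]
  intro q hq hirr
  have hsums : ∀ᵐ ω ∂coinTosses, ∀ h : ℤ, h ≠ 0 → Tendsto (cesaroMean fun n =>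
      (𝐞 (h * b * q ^ n + h * c * q ^ n * Real.ofDigits fun i => D i (ω i)) : ℂ))
      atTop (𝓝 0) := by
    simp only [ae_all_iff, eventually_imp_distrib_left]
    intro h hh
    have hhc : 1 ≤ |h * c| := by
      rw [abs_mul]
      exact one_le_mul_of_one_le_of_one_le (mod_cast Int.one_le_abs hh) hc
    exact ae_tendsto_cesaroMean_fourierChar hD hhc (mod_cast hq) hirr _
  filter_upwards [hsums] with ω hω
  refine isNormal_of_equidistributed (Int.fract_nonneg _)
    (equidistributed_of_tendsto_fourier fun h hh => ?_)
  refine (hω h hh).congr fun N => congrArg (cesaroMean · N) (funext fun n => ?_)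
  rw [← Nat.cast_pow, ← AddCircle.coe_fract (Int.fract _ * _), fract_fract_mul_natCast,
    AddCircle.coe_fract, fourier_coe_eq_fourierChar]
  push_cast
  ring_nf

section Gaps

lemma le_fract_of_intCast_add_le {x δ : ℝ} {k : ℤ} (hlow : k + δ ≤ x) (hup : x < k + 1) :
    δ ≤ Int.fract x := by
  have hfloor : (⌊x⌋ : ℝ) ≤ k := mod_cast Int.lt_add_one_iff.1 (Int.floor_lt.2 (mod_cast hup))
  rw [Int.fract]
  linarith

variable {P : ℕ}

lemma ofDigits_mul_base (d : ℕ → Fin P) :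
    Real.ofDigits d * P = d 0 + Real.ofDigits fun i => d (i + 1) := by
  have hP : (P : ℝ) ≠ 0 := mod_cast (Fin.pos (d 0)).ne'
  rw [Real.ofDigits_eq_sum_add_ofDigits d 1, Finset.sum_range_one, Real.ofDigitsTerm]
  field_simp
  ring

lemma exists_ofDigits_mul_pow_eq (d : ℕ → Fin P) (j : ℕ) :
    ∃ k : ℤ, Real.ofDigits d * (P : ℝ) ^ j = k + Real.ofDigits fun i => d (i + j) := by
  induction j with
  | zero => exact ⟨0, by simp⟩
  | succ j ih =>
    obtain ⟨k, hk⟩ := ih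
    refine ⟨k * P + d j, ?_⟩
    rw [pow_succ, ← mul_assoc, hk, add_mul, ofDigits_mul_base]
    simp only [zero_add, add_right_comm _ 1 j, add_assoc]
    push_cast
    ring

lemma ofDigits_mem_Icc (d : ℕ → Fin P) :
    Real.ofDigits d ∈ Set.Icc ((d 0 : ℝ) / P) ((d 0 + 1) / P) := by
  have hP : (0 : ℝ) < P := mod_cast Fin.pos (d 0)
  rw [Set.mem_Icc, div_le_iff₀ hP, le_div_iff₀ hP, ofDigits_mul_base]
  exact ⟨le_add_of_nonneg_right (Real.ofDigits_nonneg _),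
    add_le_add_right (Real.ofDigits_le_one _) _⟩

lemma inv_le_fract_ofDigits_mul_pow {d : ℕ → Fin P} {j : ℕ} (hpos : 1 ≤ (d j : ℕ))
    (hlt : (d j : ℕ) + 2 ≤ P) : (P : ℝ)⁻¹ ≤ Int.fract (Real.ofDigits d * (P : ℝ) ^ j) := by
  have hP : (0 : ℝ) < P := mod_cast Fin.pos (d j)
  obtain ⟨k, hk⟩ := exists_ofDigits_mul_pow_eq d j
  obtain ⟨hlow, hup⟩ := ofDigits_mem_Icc fun i => d (i + j)
  simp only [zero_add] at hlow hup
  have hone : (P : ℝ)⁻¹ ≤ d j / P := by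
    rw [inv_eq_one_div]
    gcongr
    exact mod_cast hpos
  have htwo : ((d j : ℝ) + 1) / P < 1 := by
    rw [div_lt_one hP]
    exact mod_cast (by lia : (d j : ℕ) + 1 < P)
  exact le_fract_of_intCast_add_le (k := k) (by linarith) (by linarith)

lemma inv_le_fract_sub_ofDigits_mul_pow {d : ℕ → Fin P} {t : ℝ} {j : ℕ}
    (hlt : (d j : ℕ) + 2 ≤ P)
    (hd : (d j : ℕ) + 2 ≤ ⌊P * Int.fract (t * (P : ℝ) ^ j)⌋₊ ∨
      ⌊P * Int.fract (t * (P : ℝ) ^ j)⌋₊ < d j) :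
    (P : ℝ)⁻¹ ≤ Int.fract ((t - Real.ofDigits d) * (P : ℝ) ^ j) := by
  have hP : (0 : ℝ) < P := mod_cast Fin.pos (d j)
  obtain ⟨k, hk⟩ := exists_ofDigits_mul_pow_eq d j
  obtain ⟨hlow, hup⟩ := ofDigits_mem_Icc fun i => d (i + j)
  simp only [zero_add] at hlow hup
  rw [sub_mul, hk]
  have hfloor := Int.self_sub_floor (t * (P : ℝ) ^ j)
  have hτ := Int.fract_lt_one (t * (P : ℝ) ^ j)
  have hτ0 := Int.fract_nonneg (t * (P : ℝ) ^ j)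
  set τ := Int.fract (t * (P : ℝ) ^ j)
  rcases hd with hd | hd
  · have hdτ : ((d j : ℝ) + 1) / P + (P : ℝ)⁻¹ ≤ τ := by
      have hle : (((d j : ℕ) + 2 : ℕ) : ℝ) ≤ P * τ := (Nat.le_floor_iff (by positivity)).1 hd
      push_cast at hle
      rw [inv_eq_one_div, ← add_div, div_le_iff₀ hP]
      linarith
    have hd0 : (0 : ℝ) ≤ d j / P := by positivity
    apply le_fract_of_intCast_add_le (k := ⌊t * (P : ℝ) ^ j⌋ - k) <;> push_cast <;> linarith
  · have hτd : τ < d j / P := by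
      rw [lt_div_iff₀' hP]
      exact (Nat.floor_lt (by positivity)).1 hd
    have htwo : ((d j : ℝ) + 1) / P + (P : ℝ)⁻¹ ≤ 1 := by
      rw [inv_eq_one_div, ← add_div, div_le_one hP]
      exact mod_cast (by lia : (d j : ℕ) + 1 + 1 ≤ P)
    apply le_fract_of_intCast_add_le (k := ⌊t * (P : ℝ) ^ j⌋ - k - 1) <;> push_cast <;> linarith

lemma exists_digit_pairs (hP : 8 ≤ P) (T : ℕ → ℕ) :
    ∃ D : ℕ → Bool → Fin P, (∀ i, (D i true : ℕ) = D i false + 1) ∧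
      ∀ i b, 1 ≤ (D i b : ℕ) ∧ (D i b : ℕ) + 2 ≤ P ∧
        ((D i b : ℕ) + 2 ≤ T i ∨ T i < D i b) := by
  refine ⟨fun i b => ⟨(if T i ≤ 3 then 5 else 1) + b.toNat, ?_⟩, fun i => ?_, fun i b => ?_⟩
  · cases b <;> simp only [Bool.toNat_true, Bool.toNat_false] <;> split <;> lia
  · simp
  · cases b <;> simp only [Bool.toNat_true, Bool.toNat_false] <;> split <;> lia

end Gaps

theorem exists_isNormal_fract_and_inv_le_fract {P : ℕ} (hP : 8 ≤ P) (t : ℝ) :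
    ∃ x : ℝ, ∀ y ∈ ({x, t - x} : Set ℝ),
      (∀ q : ℕ, 2 ≤ q → Irrational (Real.logb P q) → IsNormal q (Int.fract y)) ∧
        ∀ j : ℕ, (P : ℝ)⁻¹ ≤ Int.fract (y * (P : ℝ) ^ j) := by
  obtain ⟨D, hD, hgap⟩ := exists_digit_pairs hP fun j => ⌊P * Int.fract (t * (P : ℝ) ^ j)⌋₊
  obtain ⟨ω, hx, htx⟩ := ((ae_isNormal_fract_add_mul_ofDigits hD 0 (c := 1) (by simp)).and
    (ae_isNormal_fract_add_mul_ofDigits hD t (c := -1) (by simp))).exists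
  simp only [zero_add, one_mul] at hx
  simp only [neg_one_mul, ← sub_eq_add_neg] at htx
  refine ⟨Real.ofDigits fun i => D i (ω i), ?_⟩
  rw [Set.forall_mem_insert]
  simp only [Set.mem_singleton_iff, forall_eq]
  refine ⟨⟨hx, fun j => ?_⟩, htx, fun j => ?_⟩ <;> obtain ⟨hpos, hlt, hfar⟩ := hgap j (ω j)
  · exact inv_le_fract_ofDigits_mul_pow hpos hlt
  · exact inv_le_fract_sub_ofDigits_mul_pow hlt hfar

lemma irrational_logb_pow {b x : ℝ} {k : ℕ} (hk : k ≠ 0)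
    (h : Irrational (Real.log x / Real.log b)) : Irrational (Real.logb (b ^ k) x) := by
  rw [Real.logb, Real.log_pow, mul_comm, ← div_div]
  exact h.div_natCast hk

/-- **Pollington**: for `p ≥ 2`, let `𝒩(p)` be the set of `x ∈ [0,1)` normal to every base
`q ≥ 2` with `log q / log p` irrational, but not normal to base `p`.  Then every `t ∈ [0,1)`
is a sum mod 1 of two elements of `𝒩(p)`. -/
theorem pollington_sum_of_two (p : ℕ) (hp : 2 ≤ p) (Np : Set ℝ)
    (hNp : Np = {x : ℝ | x ∈ Set.Ico (0 : ℝ) 1 ∧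
      (∀ q : ℕ, 2 ≤ q → Irrational (Real.log q / Real.log p) → IsNormal q x) ∧
      ¬ IsNormal p x}) :
    ∀ t ∈ Set.Ico (0 : ℝ) 1, ∃ u ∈ Np, ∃ v ∈ Np, Int.fract (u + v) = t := by
  intro t ht
  obtain ⟨x, hx⟩ := exists_isNormal_fract_and_inv_le_fract (Nat.pow_le_pow_left hp 3) t
  push_cast at hx
  have hmem {y : ℝ} (hy : y ∈ ({x, t - x} : Set ℝ)) : Int.fract y ∈ Np := by
    obtain ⟨hnormal, hgap⟩ := hx y hy
    rw [hNp]
    exact ⟨⟨Int.fract_nonneg y, Int.fract_lt_one y⟩,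
      fun q hq hirr => hnormal q hq (irrational_logb_pow three_ne_zero hirr),
      not_isNormal_fract_of_le_fract (by lia) three_pos hgap⟩
  refine ⟨Int.fract x, hmem (.inl rfl), Int.fract (t - x), hmem (.inr rfl), ?_⟩
  refine Int.fract_eq_iff.2 ⟨ht.1, ht.2, -⌊x⌋ - ⌊t - x⌋, ?_⟩
  rw [Int.fract, Int.fract]
  push_cast
  ring
end

section
/- Let μ be a Borel probability measure on the circle ℝ/ℤ and let φ : ℕ → [0,∞) be a non-increasing function with Σ_{n≥2} φ(n)/(n log n) < ∞. If the Fourier coefficients of μ satisfy |μ̂(k)| ≤ φ(|k|) for all integers k ≠ 0, then for every integer q ≥ 2, μ-almost every x ∈ [0,1) is normal to base q. -/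
open Filter MeasureTheory Topology
open scoped Classical

/-!
The correlation of two frequencies `k i`, `k j` of a lacunary sequence under `μ` is a Fourier
coefficient of order at least `2 ^ (j - 1)`, so the Weyl sums `S N = ∑_{i < N} e(k i x)` satisfy
`∫ |S N|² dμ ≤ N (1 + 2 ∑_{j < N} φ(2 ^ (j - 1)))`. By Cauchy condensation the hypothesis on `φ`
says that `∑ φ(2 ^ j) / j < ∞`, which makes `∑ |S N|² / N³` integrable, hence finite almost
everywhere. Since `|S N|` moves by at most one per step, finiteness of this sum already forces
`S N / N → 0` (Davenport–Erdős–LeVeque). By Weyl's criterion `k i x` is then equidistributed for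
almost every `x`; for `k i = q ^ i` and the arcs cut out by the words in base `q` this is normality.
-/

section Averages

variable {E : Type*}

lemma norm_sum_range_sub_le_norm_sum_range_add [SeminormedAddCommGroup E] {u : ℕ → E}
    (hu : ∀ n, ‖u n‖ ≤ 1) (N j : ℕ) :
    ‖∑ i ∈ Finset.range N, u i‖ - j ≤ ‖∑ i ∈ Finset.range (N + j), u i‖ := by
  have hblock : ‖∑ i ∈ Finset.range j, u (N + i)‖ ≤ j := by
    simpa using norm_sum_le_of_le (Finset.range j) fun i _ => hu (N + i)
  rw [Finset.sum_range_add]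
  linarith [norm_sub_le_norm_add (∑ i ∈ Finset.range N, u i) (∑ i ∈ Finset.range j, u (N + i))]

-- As partial sums are `1`-Lipschitz in `N`, the norm `s` of the `N`-th one stays above `s / 2` for
-- the next `s / 2` indices.
lemma exists_norm_average_pow_three_le_sum [SeminormedAddCommGroup E] {u : ℕ → E}
    (hu : ∀ n, ‖u n‖ ≤ 1) (N : ℕ) :
    ∃ L : ℕ, (‖∑ i ∈ Finset.range N, u i‖ / N) ^ 3 ≤
      64 * ∑ j ∈ Finset.range L, ‖∑ i ∈ Finset.range (j + N), u i‖ ^ 2 / ((j + N : ℕ) : ℝ) ^ 3 := by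
  rcases N.eq_zero_or_pos with rfl | hN
  · exact ⟨0, by simp⟩
  set s : ℝ := ‖∑ i ∈ Finset.range N, u i‖
  have hNpos : (0 : ℝ) < N := by exact_mod_cast hN
  have hs0 : 0 ≤ s := norm_nonneg _
  have hsN : s ≤ N := by
    simpa using norm_sum_le_of_le (Finset.range N) fun i _ => hu i
  have hterm : ∀ j ∈ Finset.range (⌊s / 2⌋₊ + 1), (s / 2) ^ 2 / (2 * N) ^ 3 ≤
      ‖∑ i ∈ Finset.range (j + N), u i‖ ^ 2 / ((j + N : ℕ) : ℝ) ^ 3 := by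
    intro j hj
    have hjs : (j : ℝ) ≤ s / 2 :=
      (Nat.le_floor_iff (div_nonneg hs0 zero_le_two)).1 (Nat.lt_succ_iff.1 (Finset.mem_range.1 hj))
    have hhalf : s / 2 ≤ ‖∑ i ∈ Finset.range (j + N), u i‖ := by
      have := norm_sum_range_sub_le_norm_sum_range_add hu N j
      rw [add_comm j N]
      linarith
    gcongr
    push_cast
    linarith
  refine ⟨⌊s / 2⌋₊ + 1, ?_⟩
  calc (s / N) ^ 3 = 64 * (s / 2 * ((s / 2) ^ 2 / (2 * N) ^ 3)) := by field_simp; norm_num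
    _ ≤ 64 * ((⌊s / 2⌋₊ + 1 : ℕ) * ((s / 2) ^ 2 / (2 * N) ^ 3)) := by
        gcongr
        exact_mod_cast (Nat.lt_floor_add_one (s / 2)).le
    _ ≤ _ := by
        gcongr
        simpa using Finset.card_nsmul_le_sum _ _ _ hterm

lemma tendsto_zero_of_tendsto_pow_zero {ι : Type*} {l : Filter ι} {x : ι → ℝ} {p : ℕ} (hp : p ≠ 0)
    (hx : ∀ i, 0 ≤ x i) (h : Tendsto (fun i => x i ^ p) l (𝓝 0)) : Tendsto x l (𝓝 0) := by
  have hroot := h.rpow_const (p := (p : ℝ)⁻¹) (Or.inr (by positivity))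
  rw [Real.zero_rpow (by positivity)] at hroot
  exact hroot.congr fun i => Real.pow_rpow_inv_natCast (hx i) hp

lemma tendsto_average_zero_of_summable [SeminormedAddCommGroup E] [NormedSpace ℝ E]
    {u : ℕ → E} (hu : ∀ n, ‖u n‖ ≤ 1)
    (hs : Summable fun n : ℕ => ‖∑ i ∈ Finset.range n, u i‖ ^ 2 / (n : ℝ) ^ 3) :
    Tendsto (fun N : ℕ => (N : ℝ)⁻¹ • ∑ i ∈ Finset.range N, u i) atTop (𝓝 0) := by
  have htail := (tendsto_sum_nat_add
    fun n : ℕ => ‖∑ i ∈ Finset.range n, u i‖ ^ 2 / (n : ℝ) ^ 3).const_mul 64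
  rw [mul_zero] at htail
  have hcube : Tendsto (fun N : ℕ => (‖∑ i ∈ Finset.range N, u i‖ / N) ^ 3) atTop (𝓝 0) := by
    refine squeeze_zero (fun N => by positivity) (fun N => ?_) htail
    obtain ⟨L, hL⟩ := exists_norm_average_pow_three_le_sum hu N
    refine hL.trans (mul_le_mul_of_nonneg_left ?_ (by norm_num))
    exact ((summable_nat_add_iff N).2 hs).sum_le_tsum _ fun j _ => by positivity
  rw [tendsto_zero_iff_norm_tendsto_zero]
  refine (tendsto_zero_of_tendsto_pow_zero three_ne_zero (fun N => by positivity) hcube).congr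
    fun N => ?_
  rw [norm_smul, norm_inv, RCLike.norm_natCast, div_eq_inv_mul]

lemma summable_sum_range_div_sq {a : ℕ → ℝ} (ha : ∀ n, 0 ≤ a n)
    (hs : Summable fun n : ℕ => a n / ((n : ℝ) + 1)) :
    Summable fun n : ℕ => (∑ m ∈ Finset.range n, a m) / (n : ℝ) ^ 2 := by
  refine summable_of_sum_range_le (c := 2 * ∑' n : ℕ, a n / ((n : ℝ) + 1))
    (fun n => div_nonneg (Finset.sum_nonneg fun m _ => ha m) (by positivity)) fun K => ?_
  calc ∑ n ∈ Finset.range K, (∑ m ∈ Finset.range n, a m) / (n : ℝ) ^ 2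
      = ∑ m ∈ Finset.range K, a m * ∑ n ∈ Finset.Ioo m K, ((n : ℝ) ^ 2)⁻¹ := by
        simp_rw [div_eq_mul_inv, Finset.sum_mul, Finset.mul_sum]
        refine Finset.sum_comm' fun n m => ?_
        simp only [Finset.mem_range, Finset.mem_Ioo]
        omega
    _ ≤ ∑ m ∈ Finset.range K, a m * (2 / ((m : ℝ) + 1)) := by
        gcongr with m
        · exact ha m
        · exact sum_Ioo_inv_sq_le m K
    _ = 2 * ∑ m ∈ Finset.range K, a m / ((m : ℝ) + 1) := by
        rw [Finset.mul_sum]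
        exact Finset.sum_congr rfl fun m _ => by ring
    _ ≤ 2 * ∑' n : ℕ, a n / ((n : ℝ) + 1) := by
        gcongr
        exact hs.sum_le_tsum _ fun n _ => div_nonneg (ha n) (by positivity)

variable {Ω : Type*} [MeasurableSpace Ω] {μ : Measure Ω} [NormedAddCommGroup E]

lemma ae_summable_norm_of_summable_integral_norm {ι : Type*} [Countable ι]
    {F : ι → Ω → E} (hF : ∀ i, Integrable (F i) μ)
    (hs : Summable fun i => ∫ x, ‖F i x‖ ∂μ) : ∀ᵐ x ∂μ, Summable fun i => ‖F i x‖ := by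
  refine summable_norm_of_tsum_eLpNorm_ne_top le_rfl (fun i => (hF i).aestronglyMeasurable) ?_
  simp_rw [eLpNorm_one_eq_lintegral_enorm, ← ofReal_integral_norm_eq_lintegral_enorm (hF _)]
  exact hs.tsum_ofReal_ne_top

lemma memLp_sum_of_norm_le_one [IsFiniteMeasure μ] {ι : Type*} {f : ι → Ω → E}
    (hf : ∀ i, AEStronglyMeasurable (f i) μ)
    (hf1 : ∀ i x, ‖f i x‖ ≤ 1) (s : Finset ι) (p : ENNReal) :
    MemLp (fun x => ∑ i ∈ s, f i x) p μ :=
  memLp_finsetSum _ fun i _ => .of_bound (hf i) 1 (ae_of_all _ (hf1 i))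

lemma integrable_norm_sq_of_memLp_two {g : Ω → E} (hg : MemLp g 2 μ) :
    Integrable (fun x => ‖g x‖ ^ 2) μ :=
  mod_cast hg.integrable_norm_pow two_ne_zero

variable [InnerProductSpace ℝ E]

lemma integrable_inner_of_memLp_two {g h : Ω → E} (hg : MemLp g 2 μ) (hh : MemLp h 2 μ) :
    Integrable (fun x => inner ℝ (g x) (h x)) μ :=
  (hg.norm.integrable_mul hh.norm).mono' (hg.1.inner hh.1) <|
    ae_of_all _ fun x => norm_inner_le_norm (g x) (h x)

lemma integral_norm_add_sq_of_memLp_two {g h : Ω → E} (hg : MemLp g 2 μ) (hh : MemLp h 2 μ) :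
    ∫ x, ‖g x + h x‖ ^ 2 ∂μ =
      ∫ x, ‖g x‖ ^ 2 ∂μ + 2 * ∫ x, inner ℝ (g x) (h x) ∂μ + ∫ x, ‖h x‖ ^ 2 ∂μ := by
  have hg2 := integrable_norm_sq_of_memLp_two hg
  have hgh := (integrable_inner_of_memLp_two hg hh).const_mul 2
  simp_rw [norm_add_sq_real]
  rw [integral_add (by exact hg2.add hgh) (integrable_norm_sq_of_memLp_two hh),
    integral_add hg2 hgh, integral_const_mul]

variable [IsFiniteMeasure μ] {f : ℕ → Ω → E} {a : ℕ → ℝ}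

lemma integral_norm_sq_sum_range_le (hf : ∀ n, AEStronglyMeasurable (f n) μ)
    (hf1 : ∀ n x, ‖f n x‖ ≤ 1) (ha : ∀ n, 0 ≤ a n)
    (hcorr : ∀ i j, i < j → ∫ x, inner ℝ (f i x) (f j x) ∂μ ≤ a j) (N : ℕ) :
    ∫ x, ‖∑ i ∈ Finset.range N, f i x‖ ^ 2 ∂μ ≤
      N * (μ.real Set.univ + 2 * ∑ j ∈ Finset.range N, a j) := by
  have hL2 : ∀ n, MemLp (f n) 2 μ := fun n => .of_bound (hf n) 1 (ae_of_all _ (hf1 n))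
  induction N with
  | zero => simp
  | succ N ih =>
    have hcross : ∫ x, inner ℝ (∑ i ∈ Finset.range N, f i x) (f N x) ∂μ ≤ N * a N := by
      simp_rw [sum_inner]
      rw [integral_finsetSum _ fun i _ => integrable_inner_of_memLp_two (hL2 i) (hL2 N)]
      simpa using Finset.sum_le_card_nsmul _ _ _ fun i hi => hcorr i N (Finset.mem_range.1 hi)
    have hdiag : ∫ x, ‖f N x‖ ^ 2 ∂μ ≤ μ.real Set.univ := by
      simpa using integral_mono_of_nonneg (ae_of_all μ fun x => sq_nonneg ‖f N x‖)
        (integrable_const 1) (ae_of_all μ fun x => pow_le_one₀ (norm_nonneg _) (hf1 N x))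
    have hA : 0 ≤ ∑ j ∈ Finset.range N, a j := Finset.sum_nonneg fun j _ => ha j
    simp_rw [Finset.sum_range_succ]
    rw [integral_norm_add_sq_of_memLp_two (memLp_sum_of_norm_le_one hf hf1 _ 2) (hL2 N)]
    push_cast
    linarith [ha N]

theorem ae_tendsto_average_zero_of_integral_inner_le (hf : ∀ n, AEStronglyMeasurable (f n) μ)
    (hf1 : ∀ n x, ‖f n x‖ ≤ 1) (ha : ∀ n, 0 ≤ a n)
    (hcorr : ∀ i j, i < j → ∫ x, inner ℝ (f i x) (f j x) ∂μ ≤ a j)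
    (hs : Summable fun n : ℕ => a n / ((n : ℝ) + 1)) :
    ∀ᵐ x ∂μ, Tendsto (fun N : ℕ => (N : ℝ)⁻¹ • ∑ i ∈ Finset.range N, f i x) atTop (𝓝 0) := by
  let F : ℕ → Ω → ℝ := fun N x => ‖∑ i ∈ Finset.range N, f i x‖ ^ 2 / (N : ℝ) ^ 3
  have hF0 : ∀ N x, ‖F N x‖ = F N x := fun N x => Real.norm_of_nonneg (by positivity)
  have hFint : ∀ N, Integrable (F N) μ := fun N =>
    (integrable_norm_sq_of_memLp_two (memLp_sum_of_norm_le_one hf hf1 _ 2)).div_const _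
  have hmoment : ∀ N, ∫ x, ‖F N x‖ ∂μ ≤
      μ.real Set.univ * (1 / (N : ℝ) ^ 2) + 2 * ((∑ j ∈ Finset.range N, a j) / (N : ℝ) ^ 2) := by
    intro N
    simp_rw [hF0, F, integral_div]
    rcases N.eq_zero_or_pos with rfl | hN
    · simp
    calc _ ≤ N * (μ.real Set.univ + 2 * ∑ j ∈ Finset.range N, a j) / (N : ℝ) ^ 3 := by
          gcongr
          exact integral_norm_sq_sum_range_le hf hf1 ha hcorr N
      _ = _ := by field_simp
  have hsummable : Summable fun N => ∫ x, ‖F N x‖ ∂μ :=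
    .of_nonneg_of_le (fun N => integral_nonneg fun x => norm_nonneg _) hmoment <|
      ((Real.summable_one_div_nat_pow.2 one_lt_two).mul_left _).add
        ((summable_sum_range_div_sq ha hs).mul_left 2)
  filter_upwards [ae_summable_norm_of_summable_integral_norm hFint hsummable] with x hx
  simp_rw [hF0] at hx
  exact tendsto_average_zero_of_summable (fun n => hf1 n x) hx

end Averages

section Lacunary

lemma summable_div_of_summable_div_mul_log {φ : ℕ → ℝ} (hφ0 : ∀ n, 0 ≤ φ n) (hφ : Antitone φ)
    (hs : Summable fun n : ℕ => φ n / (n * Real.log n)) :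
    Summable fun n : ℕ => φ (2 ^ (n - 1)) / ((n : ℝ) + 1) := by
  have hlog : ∀ n : ℕ, 0 ≤ n * Real.log n := fun n =>
    mul_nonneg n.cast_nonneg (Real.log_natCast_nonneg n)
  have hcond := (summable_condensed_iff_of_eventually_nonneg
    (.of_forall fun n => div_nonneg (hφ0 n) (hlog n)) <| by
      filter_upwards [eventually_ge_atTop 2] with n hn
      have hn' : (1 : ℝ) < n := by exact_mod_cast hn
      have hlogn := Real.log_pos hn'
      exact div_le_div₀ (hφ0 n) (hφ n.le_succ) (by positivity) (by gcongr <;> simp)).2 hs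
  refine (summable_nat_add_iff 2).1 <| .of_nonneg_of_le
    (fun n => div_nonneg (hφ0 _) (by positivity)) (fun n => ?_)
    (((summable_nat_add_iff 1).2 hcond).mul_left (Real.log 2))
  have hlog2 : Real.log 2 ≠ 0 := (Real.log_pos one_lt_two).ne'
  calc φ (2 ^ (n + 2 - 1)) / (((n + 2 : ℕ) : ℝ) + 1) ≤ φ (2 ^ (n + 1)) / ((n : ℝ) + 1) := by
        gcongr
        · exact hφ0 _
        · rfl
        · simp
    _ = _ := by
        push_cast
        rw [Real.log_pow]
        push_cast
        field_simp

lemma two_pow_mul_natAbs_le_of_lacunary {k : ℕ → ℤ}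
    (hk : ∀ n, 2 * (k n).natAbs ≤ (k (n + 1)).natAbs) {i j : ℕ} (hij : i ≤ j) :
    2 ^ (j - i) * (k i).natAbs ≤ (k j).natAbs := by
  induction j, hij using Nat.le_induction with
  | base => simp
  | succ j hij ih =>
    rw [Nat.succ_sub hij, pow_succ]
    linarith [hk j]

lemma two_pow_pred_le_natAbs_sub_of_lacunary {k : ℕ → ℤ} (hk0 : k 0 ≠ 0)
    (hk : ∀ n, 2 * (k n).natAbs ≤ (k (n + 1)).natAbs) {i j : ℕ} (hij : i < j) :
    2 ^ (j - 1) ≤ (k j - k i).natAbs := by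
  obtain ⟨j, rfl⟩ := Nat.exists_eq_add_of_lt hij
  rw [show i + j + 1 - 1 = i + j by omega]
  have hfirst : 2 ^ (i + j) ≤ (k (i + j)).natAbs := by
    calc 2 ^ (i + j) ≤ 2 ^ (i + j) * (k 0).natAbs :=
          Nat.le_mul_of_pos_right _ (Int.natAbs_pos.2 hk0)
      _ ≤ _ := two_pow_mul_natAbs_le_of_lacunary hk (Nat.zero_le (i + j))
  have hmono : (k i).natAbs ≤ (k (i + j)).natAbs :=
    (Nat.le_mul_of_pos_left _ (by positivity)).trans
      (two_pow_mul_natAbs_le_of_lacunary hk (Nat.le_add_right i j))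
  have := hk (i + j)
  omega

variable {T : ℝ}

lemma inner_fourier (m n : ℤ) (z : AddCircle T) :
    inner ℝ (fourier m z : ℂ) (fourier n z) = (fourier (n - m) z : ℂ).re := by
  rw [Complex.inner, ← fourier_neg, ← fourier_add]
  congr 3

variable [Fact (0 < T)] {μ : Measure (AddCircle T)} [IsFiniteMeasure μ] {φ : ℕ → ℝ}

lemma ae_tendsto_average_fourier_of_lacunary (hφ : Antitone φ)
    (hs : Summable fun n : ℕ => φ n / (n * Real.log n))
    (hdecay : ∀ n : ℤ, n ≠ 0 → ‖∫ z, fourier (-n) z ∂μ‖ ≤ φ n.natAbs)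
    {k : ℕ → ℤ} (hk0 : k 0 ≠ 0) (hk : ∀ n, 2 * (k n).natAbs ≤ (k (n + 1)).natAbs) :
    ∀ᵐ z ∂μ, Tendsto (fun N : ℕ => (N : ℝ)⁻¹ • ∑ i ∈ Finset.range N, (fourier (k i) z : ℂ))
      atTop (𝓝 0) := by
  have hφ0 : ∀ n, 0 ≤ φ n := fun n =>
    (norm_nonneg _).trans ((hdecay _ n.cast_add_one_ne_zero).trans (hφ n.le_succ))
  refine ae_tendsto_average_zero_of_integral_inner_le
    (fun n => (fourier (k n)).continuous.aestronglyMeasurable)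
    (fun n z => (Circle.norm_coe _).le) (fun n => hφ0 (2 ^ (n - 1))) (fun i j hij => ?_)
    (summable_div_of_summable_div_mul_log hφ0 hφ hs)
  have hgap := two_pow_pred_le_natAbs_sub_of_lacunary hk0 hk hij
  have hne : k j - k i ≠ 0 := Int.natAbs_pos.1 ((Nat.two_pow_pos _).trans_le hgap)
  have hint : Integrable (fun z => (fourier (k j - k i) z : ℂ)) μ :=
    (fourier (k j - k i)).continuous.integrable_of_hasCompactSupport (.of_compactSpace _)
  calc ∫ z, inner ℝ (fourier (k i) z : ℂ) (fourier (k j) z) ∂μ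
      = (∫ z, fourier (k j - k i) z ∂μ).re := by
        simp_rw [inner_fourier]
        exact integral_re hint
    _ ≤ ‖∫ z, fourier (k j - k i) z ∂μ‖ := Complex.re_le_norm _
    _ ≤ φ (k j - k i).natAbs := by
        simpa only [neg_neg, Int.natAbs_neg] using hdecay _ (neg_ne_zero.2 hne)
    _ ≤ φ (2 ^ (j - 1)) := hφ hgap

end Lacunary

section Equidistribution

variable {X : Type*} [MeasurableSpace X]

/-- The empirical measure of the first `N + 1` terms of a sequence `w`, i.e. the uniform
distribution on them, counted with multiplicity. Starting at one term rather than none makes it a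
probability measure for every `N`. -/
noncomputable def empiricalMeasure (w : ℕ → X) (N : ℕ) : ProbabilityMeasure X :=
  ⟨((N + 1 : ℕ) : ENNReal)⁻¹ • ∑ i ∈ Finset.range (N + 1), Measure.dirac (w i), ⟨by
    simpa [Measure.finsetSum_apply] using
      ENNReal.inv_mul_cancel (Nat.cast_ne_zero.2 N.succ_ne_zero) (ENNReal.natCast_ne_top _)⟩⟩

lemma integral_empiricalMeasure {E : Type*} [NormedAddCommGroup E] [NormedSpace ℝ E]
    [CompleteSpace E] {f : X → E} (hf : StronglyMeasurable f) (w : ℕ → X) (N : ℕ) :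
    ∫ x, f x ∂(empiricalMeasure w N : Measure X) =
      ((N + 1 : ℕ) : ℝ)⁻¹ • ∑ i ∈ Finset.range (N + 1), f (w i) := by
  have hint : ∀ i ∈ Finset.range (N + 1), Integrable f (Measure.dirac (w i)) := fun i _ =>
    integrable_dirac' hf (by simp)
  change ∫ x, f x ∂(((N + 1 : ℕ) : ENNReal)⁻¹ • ∑ i ∈ Finset.range (N + 1), Measure.dirac (w i)) = _
  rw [integral_smul_measure, integral_finsetSum_measure hint, ENNReal.toReal_inv,
    ENNReal.toReal_natCast]
  simp_rw [integral_dirac' _ _ hf]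

lemma measureReal_empiricalMeasure {s : Set X} (hs : MeasurableSet s) (w : ℕ → X) (N : ℕ) :
    (empiricalMeasure w N : Measure X).real s =
      ((Finset.range (N + 1)).filter fun n => w n ∈ s).card / ((N + 1 : ℕ) : ℝ) := by
  rw [← integral_indicator_one hs,
    integral_empiricalMeasure (stronglyMeasurable_one.indicator hs), Finset.card_filter,
    div_eq_inv_mul, smul_eq_mul]
  simp [Set.indicator_apply]

variable [TopologicalSpace X] [OpensMeasurableSpace X]

/-- A sequence `w` is equidistributed with respect to a probability measure `ν` if its empirical
measures converge weakly to `ν`. -/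
def IsEquidistributed (w : ℕ → X) (ν : ProbabilityMeasure X) : Prop :=
  Tendsto (empiricalMeasure w) atTop (𝓝 ν)

lemma IsEquidistributed.tendsto_frequency [HasOuterApproxClosed X] {w : ℕ → X}
    {ν : ProbabilityMeasure X} (hw : IsEquidistributed w ν) {s : Set X} (hs : MeasurableSet s)
    (hfr : (ν : Measure X) (frontier s) = 0) :
    Tendsto (fun N : ℕ => (((Finset.range N).filter fun n => w n ∈ s).card : ℝ) / N) atTop
      (𝓝 ((ν : Measure X).real s)) := by
  refine (tendsto_add_atTop_iff_nat 1).1 (Tendsto.congr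
    (fun N => measureReal_empiricalMeasure hs w N) ?_)
  exact (ENNReal.tendsto_toReal (measure_ne_top _ s)).comp
    (ProbabilityMeasure.tendsto_measure_of_null_frontier_of_tendsto' hw hfr)

variable {T : ℝ} [Fact (0 < T)]

theorem tendsto_of_tendsto_integral_fourier {ι : Type*} {l : Filter ι}
    {μs : ι → ProbabilityMeasure (AddCircle T)} {μ : ProbabilityMeasure (AddCircle T)}
    (h : ∀ n : ℤ, Tendsto (fun i => ∫ z, fourier n z ∂(μs i : Measure (AddCircle T))) l
      (𝓝 (∫ z, fourier n z ∂(μ : Measure (AddCircle T))))) :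
    Tendsto μs l (𝓝 μ) := by
  have hint : ∀ (ν : ProbabilityMeasure (AddCircle T)) (g : C(AddCircle T, ℂ)),
      Integrable g (ν : Measure (AddCircle T)) := fun ν g =>
    g.continuous.integrable_of_hasCompactSupport (.of_compactSpace g)
  have hspan : ∀ g ∈ Submodule.span ℂ (Set.range (@fourier T)),
      Tendsto (fun i => ∫ z, g z ∂(μs i : Measure (AddCircle T))) l
        (𝓝 (∫ z, g z ∂(μ : Measure (AddCircle T)))) := by
    intro g hg
    induction hg using Submodule.span_induction with
    | mem g hg =>
      obtain ⟨n, rfl⟩ := hg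
      exact h n
    | zero => simpa using tendsto_const_nhds
    | add f g _ _ hf hg =>
      simp only [ContinuousMap.add_apply, integral_add (hint _ f) (hint _ g)]
      exact hf.add hg
    | smul c f _ hf =>
      simp only [ContinuousMap.smul_apply, smul_eq_mul, integral_const_mul]
      exact hf.const_mul c
  refine ProbabilityMeasure.tendsto_of_tight_of_separatesPoints ℂ .of_compactSpace
    (A := fourierSubalgebra.comap (BoundedContinuousFunction.toContinuousMapStarₐ ℂ)) ?_ ?_
  · rintro x y hxy
    obtain ⟨_, ⟨g, hg, rfl⟩, hne⟩ := fourierSubalgebra_separatesPoints hxy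
    exact ⟨g, ⟨g, ⟨BoundedContinuousFunction.mkOfCompact g, hg, rfl⟩, rfl⟩, hne⟩
  · intro g hg
    refine hspan (BoundedContinuousFunction.toContinuousMapStarₐ ℂ g) ?_
    rw [← fourierSubalgebra_coe]
    exact hg

lemma integral_fourier_haarAddCircle {n : ℤ} (hn : n ≠ 0) :
    ∫ z : AddCircle T, fourier n z ∂AddCircle.haarAddCircle = 0 := by
  simpa [fourierCoeff, Pi.single_eq_of_ne hn.symm] using
    congrFun (fourierCoeff_fourier (T := T) n) 0

theorem isEquidistributed_haarAddCircle_of_tendsto_average_fourier {w : ℕ → AddCircle T}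
    (hw : ∀ n : ℤ, n ≠ 0 → Tendsto (fun N : ℕ =>
      (N : ℝ)⁻¹ • ∑ i ∈ Finset.range N, (fourier n (w i) : ℂ)) atTop (𝓝 0)) :
    IsEquidistributed w ⟨AddCircle.haarAddCircle, inferInstance⟩ := by
  refine tendsto_of_tendsto_integral_fourier fun n => ?_
  rcases eq_or_ne n 0 with rfl | hn
  · simp
  simp_rw [integral_empiricalMeasure (fourier n).continuous.stronglyMeasurable]
  rw [ProbabilityMeasure.coe_mk, integral_fourier_haarAddCircle hn]
  exact (tendsto_add_atTop_iff_nat 1).2 (hw n hn)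

theorem ae_isEquidistributed_zsmul_of_fourier_decay {μ : Measure (AddCircle T)} [IsFiniteMeasure μ]
    {φ : ℕ → ℝ} (hφ : Antitone φ)
    (hs : Summable fun n : ℕ => φ n / (n * Real.log n))
    (hdecay : ∀ n : ℤ, n ≠ 0 → ‖∫ z, fourier (-n) z ∂μ‖ ≤ φ n.natAbs)
    {k : ℕ → ℤ} (hk0 : k 0 ≠ 0) (hk : ∀ n, 2 * (k n).natAbs ≤ (k (n + 1)).natAbs) :
    ∀ᵐ z ∂μ, IsEquidistributed (fun n => k n • z) ⟨AddCircle.haarAddCircle, inferInstance⟩ := by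
  have hweyl : ∀ᵐ z ∂μ, ∀ h : ℤ, h ≠ 0 → Tendsto (fun N : ℕ =>
      (N : ℝ)⁻¹ • ∑ i ∈ Finset.range N, (fourier (h * k i) z : ℂ)) atTop (𝓝 0) := by
    refine ae_all_iff.2 fun h => eventually_imp_distrib_left.2 fun hh => ?_
    refine ae_tendsto_average_fourier_of_lacunary hφ hs hdecay (mul_ne_zero hh hk0) fun n => ?_
    rw [Int.natAbs_mul, Int.natAbs_mul, Nat.mul_left_comm]
    exact Nat.mul_le_mul_left _ (hk n)
  filter_upwards [hweyl] with z hz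
  refine isEquidistributed_haarAddCircle_of_tendsto_average_fourier fun h hh => ?_
  simpa only [fourier_apply, mul_smul] using hz h hh

end Equidistribution

section Arcs

lemma mem_frontier_of_mem_frontier_preimage {X Y : Type*} [TopologicalSpace X] [TopologicalSpace Y]
    {f : X → Y} {x : X} (hf : ContinuousAt f x) {s : Set Y} (hx : x ∈ frontier (f ⁻¹' s)) :
    f x ∈ frontier s := by
  by_contra hfx
  rw [← Set.mem_compl_iff, compl_frontier_eq_union_interior] at hfx
  have hx' : x ∈ (frontier (f ⁻¹' s))ᶜ := by
    rw [compl_frontier_eq_union_interior, ← Set.preimage_compl]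
    exact hfx.imp
      (fun h => mem_interior_iff_mem_nhds.2 (hf.preimage_mem_nhds (mem_interior_iff_mem_nhds.1 h)))
      (fun h => mem_interior_iff_mem_nhds.2 (hf.preimage_mem_nhds (mem_interior_iff_mem_nhds.1 h)))
  exact hx' hx

variable {T : ℝ} [Fact (0 < T)] (a : ℝ)

lemma measurePreserving_equivIco :
    MeasurePreserving (fun z : AddCircle T => (AddCircle.equivIco T a z : ℝ)) volume
      (volume.restrict (Set.Ico a (a + T))) := by
  have hmeas : Measurable fun z : AddCircle T => (AddCircle.equivIco T a z : ℝ) :=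
    measurable_subtype_coe.comp (AddCircle.measurableEquivIco T a).measurable
  refine ⟨hmeas, ?_⟩
  rw [← (AddCircle.measurePreserving_mk T a).map_eq, Measure.map_map hmeas AddCircle.measurable_mk',
    ← restrict_Ico_eq_restrict_Ioc]
  refine (Measure.map_congr ?_).trans Measure.map_id
  filter_upwards [ae_restrict_mem measurableSet_Ico] with y hy
  exact AddCircle.equivIco_coe_of_mem hy

lemma frontier_preimage_equivIco_subset (s : Set ℝ) :
    frontier ((fun z : AddCircle T => (AddCircle.equivIco T a z : ℝ)) ⁻¹' s) ⊆
      (fun z : AddCircle T => (AddCircle.equivIco T a z : ℝ)) ⁻¹' insert a (frontier s) := by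
  intro z hz
  rcases eq_or_ne z a with rfl | hza
  · exact .inl (AddCircle.equivIco_coe_of_mem ⟨le_rfl, lt_add_of_pos_right a Fact.out⟩)
  · exact .inr (mem_frontier_of_mem_frontier_preimage
      (continuousAt_subtype_val.comp (AddCircle.continuousAt_equivIco T a hza)) hz)

lemma volume_frontier_preimage_equivIco {s : Set ℝ} (hs : volume (frontier s) = 0) :
    volume (frontier ((fun z : AddCircle T => (AddCircle.equivIco T a z : ℝ)) ⁻¹' s)) = 0 := by
  refine measure_mono_null (frontier_preimage_equivIco_subset a s) <|
    (measurePreserving_equivIco a).quasiMeasurePreserving.preimage_null <|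
      Measure.restrict_le_self.absolutelyContinuous ?_
  rw [Set.insert_eq]
  exact measure_union_null Real.volume_singleton hs

lemma volume_real_preimage_equivIco_Ico {s t : ℝ} (hs : a ≤ s) (hst : s ≤ t) (ht : t ≤ a + T) :
    volume.real ((fun z : AddCircle T => (AddCircle.equivIco T a z : ℝ)) ⁻¹' Set.Ico s t) =
      t - s := by
  rw [measureReal_def, (measurePreserving_equivIco a).measure_preimage
      measurableSet_Ico.nullMeasurableSet, Measure.restrict_apply measurableSet_Ico,
    Set.inter_eq_left.2 (Set.Ico_subset_Ico hs ht), Real.volume_Ico,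
    ENNReal.toReal_ofReal (sub_nonneg.2 hst)]

lemma haarAddCircle_eq_volume :
    (AddCircle.haarAddCircle : Measure UnitAddCircle) = volume := by
  simp [AddCircle.volume_eq_smul_haarAddCircle]

lemma IsEquidistributed.tendsto_frequency_Ico {w : ℕ → UnitAddCircle}
    (hw : IsEquidistributed w ⟨AddCircle.haarAddCircle, inferInstance⟩) {s t : ℝ}
    (hs : 0 ≤ s) (hst : s ≤ t) (ht : t ≤ 1) :
    Tendsto (fun N : ℕ => (((Finset.range N).filter fun n =>
      (AddCircle.equivIco 1 0 (w n) : ℝ) ∈ Set.Ico s t).card : ℝ) / N) atTop (𝓝 (t - s)) := by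
  have hmeas := (measurePreserving_equivIco (T := 1) 0).measurable
  have hfreq := hw.tendsto_frequency (measurableSet_Ico.preimage hmeas (t := Set.Ico s t)) (by
    rw [ProbabilityMeasure.coe_mk, haarAddCircle_eq_volume]
    exact volume_frontier_preimage_equivIco 0 ((convex_Ico s t).addHaar_frontier volume))
  rw [ProbabilityMeasure.coe_mk, haarAddCircle_eq_volume,
    volume_real_preimage_equivIco_Ico 0 hs hst (by simpa using ht)] at hfreq
  convert hfreq
  exact Iff.rfl

lemma equivIco_zsmul (k : ℤ) (z : UnitAddCircle) :
    (AddCircle.equivIco 1 0 (k • z) : ℝ) = Int.fract (AddCircle.equivIco 1 0 z * (k : ℝ)) := by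
  have hz : k • z = ((AddCircle.equivIco 1 0 z * (k : ℝ) : ℝ) : UnitAddCircle) := by
    rw [mul_comm, ← zsmul_eq_mul, AddCircle.coe_zsmul, AddCircle.coe_equivIco]
  rw [hz]
  exact (AddCircle.coe_equivIco_mk_apply _ _).trans (by rw [div_one, mul_one])

end Arcs

section Digits

variable {q : ℕ}

lemma qdigit_add {x : ℝ} (hx : 0 ≤ x) (n i : ℕ) :
    qdigit q x (n + i) = qdigit q (Int.fract (x * (q : ℝ) ^ n)) i := by
  have hsplit : x * (q : ℝ) ^ (n + i + 1) =
      Int.fract (x * (q : ℝ) ^ n) * (q : ℝ) ^ (i + 1) +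
        ((⌊x * (q : ℝ) ^ n⌋₊ * q ^ i * q : ℕ) : ℝ) := by
    have hfract := Int.fract_add_floor (x * (q : ℝ) ^ n)
    rw [← natCast_floor_eq_intCast_floor (by positivity)] at hfract
    push_cast
    rw [add_assoc, pow_add, ← mul_assoc]
    nth_rw 1 [← hfract]
    ring
  have hfract0 := Int.fract_nonneg (x * (q : ℝ) ^ n)
  change ⌊x * (q : ℝ) ^ (n + i + 1)⌋₊ % q = ⌊Int.fract (x * (q : ℝ) ^ n) * (q : ℝ) ^ (i + 1)⌋₊ % q
  rw [hsplit, Nat.floor_add_natCast (mul_nonneg hfract0 (by positivity)),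
    Nat.add_mul_mod_self_right]

lemma exists_forall_qdigit_eq_iff_floor_eq {m : ℕ} (d : Fin m → ℕ) (hd : ∀ i, d i < q) :
    ∃ a < q ^ m, ∀ y ∈ Set.Ico (0 : ℝ) 1,
      (∀ i : Fin m, qdigit q y i = d i) ↔ ⌊y * (q : ℝ) ^ m⌋₊ = a := by
  induction m with
  | zero => exact ⟨0, by simp, fun y hy => by simp [Nat.floor_eq_zero, hy.2]⟩
  | succ m ih =>
    obtain ⟨a, ha, hiff⟩ := ih (fun i => d i.castSucc) fun i => hd i.castSucc
    have hlast := hd (Fin.last m)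
    refine ⟨a * q + d (Fin.last m), ?_, fun y hy => ?_⟩
    · rw [pow_succ]
      nlinarith
    · have hq : (q : ℝ) ≠ 0 := by
        exact_mod_cast (Nat.zero_le _).trans_lt hlast |>.ne'
      have hprefix : ⌊y * (q : ℝ) ^ m⌋₊ = ⌊y * (q : ℝ) ^ (m + 1)⌋₊ / q := by
        rw [← Nat.floor_div_natCast, pow_succ, ← mul_assoc, mul_div_cancel_right₀ _ hq]
      have hdigit : qdigit q y m = ⌊y * (q : ℝ) ^ (m + 1)⌋₊ % q := rfl
      simp only [Fin.forall_fin_succ', Fin.val_castSucc, Fin.val_last]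
      rw [hiff y hy, hprefix, hdigit, Nat.div_mod_unique (by omega), and_iff_left hlast,
        add_comm, mul_comm, eq_comm]

lemma exists_forall_qdigit_eq_iff_mem_Ico {m : ℕ} (d : Fin m → ℕ) (hd : ∀ i, d i < q) :
    ∃ a < q ^ m, ∀ y ∈ Set.Ico (0 : ℝ) 1, (∀ i : Fin m, qdigit q y i = d i) ↔
      y ∈ Set.Ico (a / (q : ℝ) ^ m) ((a + 1) / (q : ℝ) ^ m) := by
  obtain ⟨a, ha, hiff⟩ := exists_forall_qdigit_eq_iff_floor_eq d hd
  have hpos : (0 : ℝ) < (q : ℝ) ^ m := by exact_mod_cast (Nat.zero_le a).trans_lt ha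
  refine ⟨a, ha, fun y hy => ?_⟩
  rw [hiff y hy, Nat.floor_eq_iff (mul_nonneg hy.1 hpos.le), Set.mem_Ico, div_le_iff₀ hpos,
    lt_div_iff₀ hpos]

theorem isNormal_of_isEquidistributed {z : UnitAddCircle}
    (hz : IsEquidistributed (fun n : ℕ => (q : ℤ) ^ n • z)
      ⟨AddCircle.haarAddCircle, inferInstance⟩) :
    IsNormal q (AddCircle.equivIco 1 0 z : ℝ) := by
  intro m _ d hd
  obtain ⟨a, ha, hiff⟩ := exists_forall_qdigit_eq_iff_mem_Ico d hd
  have hpos : (0 : ℝ) < (q : ℝ) ^ m := by exact_mod_cast (Nat.zero_le a).trans_lt ha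
  have hfreq := hz.tendsto_frequency_Ico (s := a / (q : ℝ) ^ m) (t := (a + 1) / (q : ℝ) ^ m)
    (by positivity) (by gcongr; simp) ((div_le_one hpos).2 (by exact_mod_cast ha))
  rw [← sub_div, add_sub_cancel_left, one_div] at hfreq
  convert hfreq using 6 with N n
  rw [equivIco_zsmul]
  push_cast
  rw [← hiff _ ⟨Int.fract_nonneg _, Int.fract_lt_one _⟩]
  simp_rw [qdigit_add (AddCircle.equivIco 1 0 z).2.1]

end Digits

theorem normal_ae_of_fourier_decay_general (μ : Measure UnitAddCircle) [IsFiniteMeasure μ]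
    (φ : ℕ → ℝ) (hφmono : Antitone φ)
    (hφsum : Summable fun n : ℕ => φ (n + 2) / (((n : ℝ) + 2) * Real.log ((n : ℝ) + 2)))
    (hdecay : ∀ k : ℤ, k ≠ 0 → ‖∫ z, fourier (-k) z ∂μ‖ ≤ φ k.natAbs) :
    ∀ᵐ z ∂μ, ∀ q : ℕ, 2 ≤ q →
      IsNormal q ((AddCircle.equivIco 1 0 z : Set.Ico (0 : ℝ) (0 + 1)) : ℝ) := by
  have hs : Summable fun n : ℕ => φ n / (n * Real.log n) :=
    (summable_nat_add_iff 2).1 (by simpa using hφsum)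
  refine ae_all_iff.2 fun q => eventually_imp_distrib_left.2 fun hq => ?_
  have hlac : ∀ n : ℕ, 2 * ((q : ℤ) ^ n).natAbs ≤ ((q : ℤ) ^ (n + 1)).natAbs := fun n => by
    rw [pow_succ', Int.natAbs_mul, Int.natAbs_natCast]
    exact Nat.mul_le_mul_right _ hq
  exact (ae_isEquidistributed_zsmul_of_fourier_decay hφmono hs hdecay (by simp) hlac).mono
    fun z => isNormal_of_isEquidistributed

/-- If the Fourier coefficients of a Borel probability measure `μ` on the circle `ℝ/ℤ` satisfy
`|μ̂(k)| ≤ φ(|k|)` for a non-increasing `φ : ℕ → [0, ∞)` with `∑_{n ≥ 2} φ(n)/(n log n) < ∞`,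
then for every base `q ≥ 2`, `μ`-almost every point of the circle (identified with its
representative in `[0,1)`) is normal to base `q`. -/
theorem normal_ae_of_fourier_decay (μ : Measure UnitAddCircle) [IsProbabilityMeasure μ]
    (φ : ℕ → ℝ) (hφ0 : ∀ n, 0 ≤ φ n) (hφmono : Antitone φ)
    (hφsum : Summable fun n : ℕ => φ (n + 2) / (((n : ℝ) + 2) * Real.log ((n : ℝ) + 2)))
    (hdecay : ∀ k : ℤ, k ≠ 0 → ‖∫ z, fourier (-k) z ∂μ‖ ≤ φ k.natAbs) :
    ∀ q : ℕ, 2 ≤ q →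
      ∀ᵐ z ∂μ, IsNormal q ((AddCircle.equivIco 1 0 z : Set.Ico (0 : ℝ) (0 + 1)) : ℝ) :=
  fun q hq => (normal_ae_of_fourier_decay_general μ φ hφmono hφsum hdecay).mono
    fun _ hz => hz q hq
end
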